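/- arXiv:2109.01357 — 2 statements merged into one kernel-verified Lean document; each statement's English description precedes it below -/
import Mathlib

section
/- Let G, H, F be binary structures, let c < ω, and let (α,β) be a position arrived at in the pebble game Γ^c_n(B_{G,F}, B_{H,F}) during which ∃ plays using the mirroring strategy induced by a winning strategy in the parallel colouring game G^{c+3}_ω(G,H), and let (g,h) be the corresponding position of the parallel colouring game. Then for every relation-algebra term t whose variables are indexed by the common domain of α and β: if ∀ continues the colouring game by colouring γ(t) = {x ∈ G : g_x ≤ t^α} with a colour not previously used, then any response of ∃ other than colouring η(t) = {y ∈ H : g_y ≤ t^β} results in a position from which ∀ can force a win in G^{c+3}_ω(G,H); and symmetrically with the roles of γ(t) and η(t) exchanged. -/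
/-! ## Binary structures -/

/-- A binary structure: a carrier set together with a family of binary relations
indexed by a signature `σ` consisting of binary predicate symbols. -/
structure BinStruct (σ : Type) : Type 1 where
  V : Type
  rel : σ → V → V → Prop

variable {σ : Type}

/-- The partial map `{(i,j),(i',j')}` is a partial homomorphism from `G` to `H`:
for all distinct elements of the domain and every binary predicate, the predicate
is preserved. -/
def PartialHom2 (G H : BinStruct σ) (i i' : G.V) (j j' : H.V) : Prop :=
  ∀ b : σ, (G.rel b i i' → H.rel b j j') ∧ (G.rel b i' i → H.rel b j' j)

/-- `f` is a (total) homomorphism from `G` to `H`. -/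
def IsHom (G H : BinStruct σ) (f : G.V → H.V) : Prop :=
  ∀ (b : σ) (u v : G.V), u ≠ v → G.rel b u v → H.rel b (f u) (f v)

/-! ## The rainbow atom structure -/

/-- Atoms of the rainbow relation algebra `B_{G,H}`. -/
inductive RbAtom (α β : Type) : Type
  | id : RbAtom α β
  | black : RbAtom α β
  | white : RbAtom α β
  | yellow : RbAtom α β
  | green (i : α) : RbAtom α β
  | red (j j' : β) : RbAtom α β

namespace RbAtom

/-- Converse of an atom: all atoms are self-converse except `(red j j')⌣ = red j' j`. -/
def conv {α β : Type} : RbAtom α β → RbAtom α β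
  | red j j' => red j' j
  | a => a

end RbAtom

/-- The generating forbidden triples (I)–(VI) of the rainbow algebra `B_{G,H}`. -/
inductive BaseForbidden (G H : BinStruct σ) :
    RbAtom G.V H.V → RbAtom G.V H.V → RbAtom G.V H.V → Prop
  | ident (a b : RbAtom G.V H.V) : a ≠ b → BaseForbidden G H .id a b
  | ggg (i i' i'' : G.V) : BaseForbidden G H (.green i) (.green i') (.green i'')
  | ggw (i i' : G.V) : BaseForbidden G H (.green i) (.green i') .white
  | yyy : BaseForbidden G H .yellow .yellow .yellow
  | yyb : BaseForbidden G H .yellow .yellow .black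
  | rrr (j₁ j₂ j₂' j₃' j₁s j₃s : H.V) : ¬(j₁ = j₁s ∧ j₂ = j₂' ∧ j₃' = j₃s) →
      BaseForbidden G H (.red j₁ j₂) (.red j₂' j₃') (.red j₁s j₃s)
  | ggr (i i' : G.V) (j j' : H.V) : ¬(i ≠ i' ∧ PartialHom2 G H i i' j j') →
      BaseForbidden G H (.green i) (.green i') (.red j j')

/-- A triple of atoms is forbidden if it is a Peircean transform of one of the
generating forbidden triples. -/
def Forbidden (G H : BinStruct σ) (a b c : RbAtom G.V H.V) : Prop :=
  ∃ x y z : RbAtom G.V H.V, BaseForbidden G H x y z ∧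
    ((a, b, c) = (x, y, z) ∨ (a, b, c) = (x.conv, z, y) ∨ (a, b, c) = (z, y.conv, x) ∨
     (a, b, c) = (y.conv, x.conv, z.conv) ∨ (a, b, c) = (y, z.conv, x.conv) ∨
     (a, b, c) = (z.conv, x, y.conv))

/-! ## The rainbow relation algebra (complex algebra of the atom structure) -/

/-- Composition in the complex algebra: `c ≤ X ; Y` iff there are `a ∈ X`, `b ∈ Y`
such that the triple `(a, b, c)` is not forbidden. -/
def rbComp (G H : BinStruct σ) (X Y : Set (RbAtom G.V H.V)) : Set (RbAtom G.V H.V) :=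
  {c | ∃ a ∈ X, ∃ b ∈ Y, ¬ Forbidden G H a b c}

/-- Converse in the complex algebra. -/
def rbConv {α β : Type} (X : Set (RbAtom α β)) : Set (RbAtom α β) :=
  {a | RbAtom.conv a ∈ X}

/-- The rainbow relation algebra `B_{G,H}` is completely representable: there is an
isomorphism onto an algebra of binary relations on some base set (with union,
complement, relational composition, converse and the identity relation) carrying
all suprema to unions. -/
def CompletelyRepresentable (G H : BinStruct σ) : Prop :=
  ∃ (X : Type) (θ : Set (RbAtom G.V H.V) → Set (X × X)),
    Function.Injective θ ∧
    (∀ S : Set (Set (RbAtom G.V H.V)), θ (⋃₀ S) = ⋃₀ (θ '' S)) ∧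
    (∀ A : Set (RbAtom G.V H.V), θ Aᶜ = θ Set.univ \ θ A) ∧
    (∀ A B : Set (RbAtom G.V H.V),
        θ (rbComp G H A B) = {p : X × X | ∃ z : X, (p.1, z) ∈ θ A ∧ (z, p.2) ∈ θ B}) ∧
    (∀ A : Set (RbAtom G.V H.V), θ (rbConv A) = {p : X × X | (p.2, p.1) ∈ θ A}) ∧
    θ {RbAtom.id} = {p : X × X | p.1 = p.2}

/-! ## The colouring game -/

/-- The set of vertices coloured (according to the interpretation `g`) with exactly
the colours in a palette `π`. -/
def PaletteSet {V : Type} {c : ℕ} (g : Fin c → Set V) (π : Set (Fin c)) : Set V :=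
  {x | ∀ t : Fin c, x ∈ g t ↔ t ∈ π}

/-- The position `(g,h)` of the `c`-colour colouring game on `(G,H)` is an immediate
win for ∀: (C1) some palette is realised in exactly one of the two structures, or
(C2) some pair of palettes and binary predicate produce a nonempty intersection in
exactly one of the two structures. -/
def ColWin (G H : BinStruct σ) (c : ℕ)
    (g : Fin c → Set G.V) (h : Fin c → Set H.V) : Prop :=
  (∃ π : Set (Fin c), Xor' (PaletteSet g π = ∅) (PaletteSet h π = ∅)) ∨
  (∃ (π π' : Set (Fin c)) (b : σ),
      Xor' ((PaletteSet g π ×ˢ PaletteSet g π') ∩ {q | G.rel b q.1 q.2} = ∅)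
           ((PaletteSet h π ×ˢ PaletteSet h π') ∩ {q | H.rel b q.1 q.2} = ∅))

/-- `∃` has a winning strategy in the infinitely long `c`-colour colouring game
`G^c_ω(G,H)` starting from the position `(g,h)`: there is an invariant family of safe
positions containing `(g,h)`, avoiding wins for `∀`, such that every move of `∀`
(a colour together with a set of vertices of either structure) has a response by `∃`
(a set of vertices of the other structure) staying in the family. -/
def ExSurvives (G H : BinStruct σ) (c : ℕ)
    (g : Fin c → Set G.V) (h : Fin c → Set H.V) : Prop :=
  ∃ Inv : (Fin c → Set G.V) → (Fin c → Set H.V) → Prop,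
    Inv g h ∧
    (∀ g' h', Inv g' h' → ¬ ColWin G H c g' h') ∧
    (∀ g' h', Inv g' h' → ∀ (t : Fin c) (S : Set G.V), ∃ T : Set H.V,
        Inv (Function.update g' t S) (Function.update h' t T)) ∧
    (∀ g' h', Inv g' h' → ∀ (t : Fin c) (T : Set H.V), ∃ S : Set G.V,
        Inv (Function.update g' t S) (Function.update h' t T))

/-- `∀` can force a win in the colouring game from the position `(g,h)`:
either the position is already a win for him, or he has a move such that
every response of `∃` leads to a position from which he can force a win. -/
inductive AllForcesWin (G H : BinStruct σ) (c : ℕ) :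
    (Fin c → Set G.V) → (Fin c → Set H.V) → Prop
  | now (g h) : ColWin G H c g h → AllForcesWin G H c g h
  | moveG (g h) (t : Fin c) (S : Set G.V) :
      (∀ T : Set H.V,
        AllForcesWin G H c (Function.update g t S) (Function.update h t T)) →
      AllForcesWin G H c g h
  | moveH (g h) (t : Fin c) (T : Set H.V) :
      (∀ S : Set G.V,
        AllForcesWin G H c (Function.update g t S) (Function.update h t T)) →
      AllForcesWin G H c g h

/-! ## Relation algebras, terms and formulas -/

/-- A relation algebra (Tarski's axioms): a Boolean algebra with an associative,
additive composition `;` with two-sided identity `1'`, and an additive involutive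
converse satisfying the Peircean/Tarski axioms. -/
class RelationAlgebra (A : Type) extends BooleanAlgebra A where
  comp : A → A → A
  conv : A → A
  one' : A
  comp_assoc : ∀ x y z : A, comp (comp x y) z = comp x (comp y z)
  comp_one' : ∀ x : A, comp x one' = x
  one'_comp : ∀ x : A, comp one' x = x
  sup_comp : ∀ x y z : A, comp (x ⊔ y) z = comp x z ⊔ comp y z
  comp_sup : ∀ x y z : A, comp x (y ⊔ z) = comp x y ⊔ comp x z
  conv_conv : ∀ x : A, conv (conv x) = x
  conv_sup : ∀ x y : A, conv (x ⊔ y) = conv x ⊔ conv y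
  conv_comp : ∀ x y : A, conv (comp x y) = comp (conv y) (conv x)
  tarski : ∀ x y : A, comp (conv x) (comp x y)ᶜ ⊓ y = ⊥

/-- A relation algebra is representable (a member of RRA) if it is isomorphic to a
subalgebra of an algebra of binary relations on some base set, with union,
complement, relational composition, converse and the identity relation. -/
def Representable (A : Type) [RelationAlgebra A] : Prop :=
  ∃ (X : Type) (θ : A → Set (X × X)),
    Function.Injective θ ∧
    (∀ a b : A, θ (a ⊔ b) = θ a ∪ θ b) ∧
    (∀ a : A, θ aᶜ = θ ⊤ \ θ a) ∧
    (∀ a b : A, θ (RelationAlgebra.comp a b) =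
        {p : X × X | ∃ z : X, (p.1, z) ∈ θ a ∧ (z, p.2) ∈ θ b}) ∧
    (∀ a : A, θ (RelationAlgebra.conv a) = {p : X × X | (p.2, p.1) ∈ θ a}) ∧
    θ RelationAlgebra.one' = {p : X × X | p.1 = p.2}

/-- A signature of relation-algebra operations on a carrier `A` (used to interpret
relation-algebra terms both in abstract relation algebras and in the concrete
rainbow complex algebras). -/
structure RAOps (A : Type) where
  bot : A
  top : A
  one' : A
  sup : A → A → A
  inf : A → A → A
  compl : A → A
  comp : A → A → A
  conv : A → A

/-- The operations of an abstract relation algebra. -/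
def RAOps.ofClass (A : Type) [RelationAlgebra A] : RAOps A :=
  ⟨⊥, ⊤, RelationAlgebra.one', (· ⊔ ·), (· ⊓ ·), (·ᶜ), RelationAlgebra.comp,
    RelationAlgebra.conv⟩

/-- The operations of the rainbow complex algebra `B_{G,H}`. -/
def rbOps (G H : BinStruct σ) : RAOps (Set (RbAtom G.V H.V)) :=
  ⟨∅, Set.univ, {RbAtom.id}, (· ∪ ·), (· ∩ ·), (·ᶜ), rbComp G H, rbConv⟩

/-- Terms in the language of relation algebras with variables `x_0, …, x_{c-1}`. -/
inductive RATerm (c : ℕ) : Type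
  | var (i : Fin c) : RATerm c
  | bot : RATerm c
  | top : RATerm c
  | one' : RATerm c
  | sup (s t : RATerm c) : RATerm c
  | inf (s t : RATerm c) : RATerm c
  | compl (t : RATerm c) : RATerm c
  | comp (s t : RATerm c) : RATerm c
  | conv (t : RATerm c) : RATerm c

namespace RATerm

variable {c : ℕ} {A : Type}

/-- Evaluation of a term under a total assignment of the variables. -/
def eval (ops : RAOps A) (v : Fin c → A) : RATerm c → A
  | var i => v i
  | bot => ops.bot
  | top => ops.top
  | one' => ops.one'
  | sup s t => ops.sup (s.eval ops v) (t.eval ops v)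
  | inf s t => ops.inf (s.eval ops v) (t.eval ops v)
  | compl t => ops.compl (t.eval ops v)
  | comp s t => ops.comp (s.eval ops v) (t.eval ops v)
  | conv t => ops.conv (t.eval ops v)

/-- Evaluation of a term under a partial assignment of the variables; defined
just when every variable of the term lies in the domain of the assignment. -/
def evalo (ops : RAOps A) (v : Fin c → Option A) : RATerm c → Option A
  | var i => v i
  | bot => some ops.bot
  | top => some ops.top
  | one' => some ops.one'
  | sup s t => (s.evalo ops v).bind fun a => (t.evalo ops v).map fun b => ops.sup a b
  | inf s t => (s.evalo ops v).bind fun a => (t.evalo ops v).map fun b => ops.inf a b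
  | compl t => (t.evalo ops v).map ops.compl
  | comp s t => (s.evalo ops v).bind fun a => (t.evalo ops v).map fun b => ops.comp a b
  | conv t => (t.evalo ops v).map ops.conv

/-- The variables occurring in a term. -/
def vars : RATerm c → Finset (Fin c)
  | var i => {i}
  | bot => ∅
  | top => ∅
  | one' => ∅
  | sup s t => s.vars ∪ t.vars
  | inf s t => s.vars ∪ t.vars
  | compl t => t.vars
  | comp s t => s.vars ∪ t.vars
  | conv t => t.vars

end RATerm

/-- First-order formulas in the language of relation algebras with variables
`x_0, …, x_{c-1}`. -/
inductive RAFormula (c : ℕ) : Type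
  | eq (s t : RATerm c) : RAFormula c
  | not (φ : RAFormula c) : RAFormula c
  | and (φ ψ : RAFormula c) : RAFormula c
  | ex (i : Fin c) (φ : RAFormula c) : RAFormula c

namespace RAFormula

variable {c : ℕ} {A : Type}

/-- Quantifier depth of a formula. -/
def qd : RAFormula c → ℕ
  | eq _ _ => 0
  | not φ => φ.qd
  | and φ ψ => max φ.qd ψ.qd
  | ex _ φ => φ.qd + 1

/-- Free variables of a formula. -/
def freeVars : RAFormula c → Finset (Fin c)
  | eq s t => s.vars ∪ t.vars
  | not φ => φ.freeVars
  | and φ ψ => φ.freeVars ∪ ψ.freeVars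
  | ex i φ => φ.freeVars \ {i}

/-- Satisfaction of a formula under a total assignment of the variables. -/
def Sat (ops : RAOps A) (v : Fin c → A) : RAFormula c → Prop
  | eq s t => s.eval ops v = t.eval ops v
  | not φ => ¬ Sat ops v φ
  | and φ ψ => Sat ops v φ ∧ Sat ops v ψ
  | ex i φ => ∃ a : A, Sat ops (Function.update v i a) φ

end RAFormula

/-! ## The pebble equivalence game on relation algebras -/

/-- The position `(α,β)` of the pebble game is good for `∃`: the two partial maps have
the same domain and the correspondence `t^α ↦ t^β` between the generated subalgebras
(given by evaluating terms whose variables lie in the common domain) is a well-defined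
isomorphism. -/
def GoodPos {A B : Type} (opsA : RAOps A) (opsB : RAOps B) (c : ℕ)
    (α : Fin c → Option A) (β : Fin c → Option B) : Prop :=
  (∀ i : Fin c, (α i).isSome ↔ (β i).isSome) ∧
  ∀ s t : RATerm c,
    (s.evalo opsA α = t.evalo opsA α ↔ s.evalo opsB β = t.evalo opsB β)

/-- `∃` has a winning strategy in the `c`-pebble, `n`-round equivalence game
`Γ^c_n(A, α, B, β)` (for finite `n`). -/
def ExWinsPebble {A B : Type} (opsA : RAOps A) (opsB : RAOps B) (c : ℕ) :
    ℕ → (Fin c → Option A) → (Fin c → Option B) → Prop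
  | 0, α, β => GoodPos opsA opsB c α β
  | n + 1, α, β => GoodPos opsA opsB c α β ∧
      (∀ (t : Fin c) (a : A), ∃ b : B,
        ExWinsPebble opsA opsB c n
          (Function.update α t (some a)) (Function.update β t (some b))) ∧
      (∀ (t : Fin c) (b : B), ∃ a : A,
        ExWinsPebble opsA opsB c n
          (Function.update α t (some a)) (Function.update β t (some b)))

/-- `∃` has a winning strategy in the infinitely long `c`-pebble equivalence game
`Γ^c_ω(A, α, B, β)`. -/
def ExWinsPebbleOmega {A B : Type} (opsA : RAOps A) (opsB : RAOps B) (c : ℕ)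
    (α : Fin c → Option A) (β : Fin c → Option B) : Prop :=
  ∃ Inv : (Fin c → Option A) → (Fin c → Option B) → Prop,
    Inv α β ∧
    (∀ α' β', Inv α' β' → GoodPos opsA opsB c α' β') ∧
    (∀ α' β', Inv α' β' → ∀ (t : Fin c) (a : A), ∃ b : B,
        Inv (Function.update α' t (some a)) (Function.update β' t (some b))) ∧
    (∀ α' β', Inv α' β' → ∀ (t : Fin c) (b : B), ∃ a : A,
        Inv (Function.update α' t (some a)) (Function.update β' t (some b)))

/-- `∃` has a winning strategy in the `c`-pebble, `n`-round equivalence game, where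
`n ≤ ω` (`n : ℕ∞`). -/
def ExWinsPebbleE {A B : Type} (opsA : RAOps A) (opsB : RAOps B) (c : ℕ)
    (n : ℕ∞) (α : Fin c → Option A) (β : Fin c → Option B) : Prop :=
  match n with
  | ⊤ => ExWinsPebbleOmega opsA opsB c α β
  | (m : ℕ) => ExWinsPebble opsA opsB c m α β

/-! ## The mirroring strategy -/

/-- The set of green subscripts of an element of a rainbow algebra. -/
def greenPart {V F : Type} (x : Set (RbAtom V F)) : Set V := {i | RbAtom.green i ∈ x}

/-- The element of the other rainbow algebra with the same non-green part as `x` and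
green part determined by `Y`. -/
def mirrorElt {V W F : Type} (x : Set (RbAtom V F)) (Y : Set W) : Set (RbAtom W F) :=
  fun a => match a with
  | RbAtom.green j => j ∈ Y
  | RbAtom.id => RbAtom.id ∈ x
  | RbAtom.black => RbAtom.black ∈ x
  | RbAtom.white => RbAtom.white ∈ x
  | RbAtom.yellow => RbAtom.yellow ∈ x
  | RbAtom.red j j' => RbAtom.red j j' ∈ x

/-- Inclusion of the first `c` colours into the `c+3` colours of the parallel game. -/
def liftCol {c : ℕ} (t : Fin c) : Fin (c + 3) := Fin.castLE (Nat.le_add_right c 3) t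

/-- A combined state of a play of the pebble game `Γ^c(B_{G,F}, B_{H,F})` together
with the parallel play of the colouring game `G^{c+3}_ω(G,H)`, recording also the
set of colours used so far. -/
structure MirrorState (c : ℕ) (G H F : BinStruct σ) : Type where
  α : Fin c → Option (Set (RbAtom G.V F.V))
  β : Fin c → Option (Set (RbAtom H.V F.V))
  g : Fin (c + 3) → Set G.V
  h : Fin (c + 3) → Set H.V
  used : Set (Fin (c + 3))

/-- The initial state: no pebbles placed, all vertices uncoloured, no colour used. -/
def mirrorInit (c : ℕ) (G H F : BinStruct σ) : MirrorState c G H F :=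
  ⟨fun _ => none, fun _ => none, fun _ => ∅, fun _ => ∅, ∅⟩

/-- `Inv` is a winning invariant witnessing a winning strategy for `∃` in the
colouring game `G^c_ω(G,H)` (from the initial position). -/
def IsColInvariant (G H : BinStruct σ) (c : ℕ)
    (Inv : (Fin c → Set G.V) → (Fin c → Set H.V) → Prop) : Prop :=
  Inv (fun _ => ∅) (fun _ => ∅) ∧
  (∀ g h, Inv g h → ¬ ColWin G H c g h) ∧
  (∀ g h, Inv g h → ∀ (t : Fin c) (S : Set G.V), ∃ T : Set H.V,
      Inv (Function.update g t S) (Function.update h t T)) ∧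
  (∀ g h, Inv g h → ∀ (t : Fin c) (T : Set H.V), ∃ S : Set G.V,
      Inv (Function.update g t S) (Function.update h t T))

/-- One round of the pebble game `Γ^c(B_{G,F}, B_{H,F})` in which `∃` plays the
mirroring strategy induced by the colouring-game winning strategy witnessed by the
invariant `Inv`: when `∀` plays pebble `t` on an element of one algebra, `∃` colours
the set of its green subscripts with colour `t` in the parallel colouring game,
obtains a response keeping the parallel play inside `Inv`, and answers with the
element with identical non-green part and green part determined by that response. -/
inductive MirrorStep (G H F : BinStruct σ) (c : ℕ)
    (Inv : (Fin (c + 3) → Set G.V) → (Fin (c + 3) → Set H.V) → Prop) :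
    MirrorState c G H F → MirrorState c G H F → Prop
  | fromG (s : MirrorState c G H F) (t : Fin c) (x : Set (RbAtom G.V F.V)) (Y : Set H.V) :
      Inv (Function.update s.g (liftCol t) (greenPart x))
          (Function.update s.h (liftCol t) Y) →
      MirrorStep G H F c Inv s
        ⟨Function.update s.α t (some x),
         Function.update s.β t (some (mirrorElt x Y)),
         Function.update s.g (liftCol t) (greenPart x),
         Function.update s.h (liftCol t) Y,
         insert (liftCol t) s.used⟩
  | fromH (s : MirrorState c G H F) (t : Fin c) (y : Set (RbAtom H.V F.V)) (X : Set G.V) :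
      Inv (Function.update s.g (liftCol t) X)
          (Function.update s.h (liftCol t) (greenPart y)) →
      MirrorStep G H F c Inv s
        ⟨Function.update s.α t (some (mirrorElt y X)),
         Function.update s.β t (some y),
         Function.update s.g (liftCol t) X,
         Function.update s.h (liftCol t) (greenPart y),
         insert (liftCol t) s.used⟩

/-- The states reachable in a play of the pebble game `Γ^c(B_{G,F}, B_{H,F})`
during which `∃` plays using the mirroring strategy. -/
def MirrorReachable (G H F : BinStruct σ) (c : ℕ)
    (Inv : (Fin (c + 3) → Set G.V) → (Fin (c + 3) → Set H.V) → Prop)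
    (s : MirrorState c G H F) : Prop :=
  Relation.ReflTransGen (MirrorStep G H F c Inv) (mirrorInit c G H F) s

/-! ## Auxiliary development -/

/-- The data of a back-and-forth family of safe positions around a base position. -/
structure MFSetup (G H : BinStruct σ) (n : ℕ)
    (Safe : (Fin n → Set G.V) → (Fin n → Set H.V) → Prop) (U : Set (Fin n))
    (g0 : Fin n → Set G.V) (h0 : Fin n → Set H.V) : Prop where
  safe0 : Safe g0 h0
  forth : ∀ g h, Safe g h → ∀ (t : Fin n) (S : Set G.V), ∃ T : Set H.V,
    Safe (Function.update g t S) (Function.update h t T)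
  back : ∀ g h, Safe g h → ∀ (t : Fin n) (T : Set H.V), ∃ S : Set G.V,
    Safe (Function.update g t S) (Function.update h t T)
  pal : ∀ g h, Safe g h → ∀ x, ∃ y, ∀ t, x ∈ g t ↔ y ∈ h t
  palr : ∀ g h, Safe g h → ∀ y, ∃ x, ∀ t, y ∈ h t ↔ x ∈ g t
  rel : ∀ g h, Safe g h → ∀ b x x', G.rel b x x' →
    ∃ y y', (∀ t, x ∈ g t ↔ y ∈ h t) ∧ (∀ t, x' ∈ g t ↔ y' ∈ h t) ∧ H.rel b y y'
  relr : ∀ g h, Safe g h → ∀ b y y', H.rel b y y' →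
    ∃ x x', (∀ t, y ∈ h t ↔ x ∈ g t) ∧ (∀ t, y' ∈ h t ↔ x' ∈ g t) ∧ G.rel b x x'
  fresh : ∀ k1 k2 : Fin n, ∃ k, k ∉ U ∧ k ≠ k1 ∧ k ≠ k2

theorem MFSetup.symm {G H : BinStruct σ} {n : ℕ}
    {Safe : (Fin n → Set G.V) → (Fin n → Set H.V) → Prop} {U : Set (Fin n)}
    {g0 : Fin n → Set G.V} {h0 : Fin n → Set H.V} (M : MFSetup G H n Safe U g0 h0) :
    MFSetup H G n (fun h g => Safe g h) U h0 g0 where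
  safe0 := M.safe0
  forth := fun g h hs => M.back h g hs
  back := fun g h hs => M.forth h g hs
  pal := fun g h hs => M.palr h g hs
  palr := fun g h hs => M.pal h g hs
  rel := fun g h hs => M.relr h g hs
  relr := fun g h hs => M.rel h g hs
  fresh := M.fresh

/-- A safe position agreeing with the base position on the used colours. -/
def MFPos {G H : BinStruct σ} {n : ℕ}
    (Safe : (Fin n → Set G.V) → (Fin n → Set H.V) → Prop) (U : Set (Fin n))
    (g0 : Fin n → Set G.V) (h0 : Fin n → Set H.V)
    (g : Fin n → Set G.V) (h : Fin n → Set H.V) : Prop :=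
  Safe g h ∧ ∀ u ∈ U, g u = g0 u ∧ h u = h0 u

/-- The sets correspond: pebbled pairs of points are in the sets simultaneously. -/
def MFCorr {G H : BinStruct σ} {n : ℕ}
    (Safe : (Fin n → Set G.V) → (Fin n → Set H.V) → Prop) (U : Set (Fin n))
    (g0 : Fin n → Set G.V) (h0 : Fin n → Set H.V) (γ : Set G.V) (η : Set H.V) : Prop :=
  ∀ g h, MFPos Safe U g0 h0 g h → ∀ k ∉ U, ∀ x y, g k = {x} → h k = {y} → (x ∈ γ ↔ y ∈ η)

theorem MFPos.symm {G H : BinStruct σ} {n : ℕ}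
    {Safe : (Fin n → Set G.V) → (Fin n → Set H.V) → Prop} {U : Set (Fin n)}
    {g0 : Fin n → Set G.V} {h0 : Fin n → Set H.V} {g h} (P : MFPos Safe U g0 h0 g h) :
    MFPos (G := H) (H := G) (fun h g => Safe g h) U h0 g0 h g :=
  ⟨P.1, fun u hu => (P.2 u hu).symm⟩

theorem MFCorr.symm {G H : BinStruct σ} {n : ℕ}
    {Safe : (Fin n → Set G.V) → (Fin n → Set H.V) → Prop} {U : Set (Fin n)}
    {g0 : Fin n → Set G.V} {h0 : Fin n → Set H.V} {γ η} (P : MFCorr Safe U g0 h0 γ η) :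
    MFCorr (G := H) (H := G) (fun h g => Safe g h) U h0 g0 η γ :=
  fun h g hp k hk y x hy hx => (P g h hp.symm k hk x y hx hy).symm

theorem MFPos.update {G H : BinStruct σ} {n : ℕ}
    {Safe : (Fin n → Set G.V) → (Fin n → Set H.V) → Prop} {U : Set (Fin n)}
    {g0 : Fin n → Set G.V} {h0 : Fin n → Set H.V} {g h} (P : MFPos Safe U g0 h0 g h)
    {k : Fin n} (hk : k ∉ U) {S T} (hs : Safe (Function.update g k S) (Function.update h k T)) :
    MFPos Safe U g0 h0 (Function.update g k S) (Function.update h k T) := by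
  refine ⟨hs, fun u hu => ?_⟩
  have : u ≠ k := fun e => hk (e ▸ hu)
  simpa [Function.update_of_ne this] using P.2 u hu

section
variable {G H : BinStruct σ} {n : ℕ}
    {Safe : (Fin n → Set G.V) → (Fin n → Set H.V) → Prop} {U : Set (Fin n)}
    {g0 : Fin n → Set G.V} {h0 : Fin n → Set H.V}

/-- From a half-singleton pebble to a singleton pair, on a colour different from a given one. -/
theorem MFSetup.ext (M : MFSetup G H n Safe U g0 h0) {g h} (P : MFPos Safe U g0 h0 g h)
    {k : Fin n} {x y} (hx : g k = {x}) (hy : y ∈ h k) :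
    ∃ g' h' k', MFPos Safe U g0 h0 g' h' ∧ k' ∉ U ∧ g' k' = {x} ∧ h' k' = {y} := by
  obtain ⟨k', hk', hne, -⟩ := M.fresh k k
  obtain ⟨S, hS⟩ := M.back g h P.1 k' {y}
  refine ⟨_, _, k', P.update hk' hS, hk', ?_, by simp⟩
  obtain ⟨u, hu⟩ := M.palr _ _ hS y
  have key : ∀ v ∈ S, v = x := by
    intro v hv
    obtain ⟨w, hw⟩ := M.pal _ _ hS v
    have h1 := hw k'
    simp [hv] at h1
    have h2 := hw k
    simp [hne.symm, hx, h1, hy] at h2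
    exact h2
  have huS : u ∈ S := by simpa using hu k'
  simp only [Function.update_self]
  ext v
  constructor
  · exact key v
  · rintro rfl
    exact (key u huS) ▸ huS

theorem MFSetup.core0 (M : MFSetup G H n Safe U g0 h0) {g h} (P : MFPos Safe U g0 h0 g h)
    {k : Fin n} (hk : k ∉ U) (x : G.V) :
    ∃ y T, MFPos Safe U g0 h0 (Function.update g k {x}) (Function.update h k T) ∧ y ∈ T ∧
      (∀ t, t ≠ k → (x ∈ g t ↔ y ∈ h t)) ∧
      ∃ g' h' k', MFPos Safe U g0 h0 g' h' ∧ k' ∉ U ∧ g' k' = {x} ∧ h' k' = {y} := by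
  obtain ⟨T, hT⟩ := M.forth g h P.1 k {x}
  obtain ⟨y, hy⟩ := M.pal _ _ hT x
  have hyT : y ∈ T := by simpa using hy k
  refine ⟨y, T, P.update hk hT, hyT, fun t ht => by simpa [ht] using hy t, ?_⟩
  exact M.ext (P.update hk hT) (k := k) (by simp) (by simpa using hyT)

/-- Two pebbled pairs look alike, in the direction needed for one inclusion. -/
def MFPair (G H : BinStruct σ) (x : G.V) (y : H.V) (x' : G.V) (y' : H.V) : Prop :=
  (x = x' ↔ y = y') ∧ ∀ b, (H.rel b y y' → G.rel b x x') ∧ (H.rel b y' y → G.rel b x' x)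

theorem MFSetup.core (M : MFSetup G H n Safe U g0 h0) {g h} (P : MFPos Safe U g0 h0 g h)
    {k : Fin n} (hk : k ∉ U) {x y} (hx : g k = {x}) (hy : h k = {y}) (x' : G.V) :
    ∃ y', MFPair G H x y x' y' ∧ ∀ γ η, MFCorr Safe U g0 h0 γ η → (x' ∈ γ ↔ y' ∈ η) := by
  by_cases hxx : x = x'
  · subst hxx
    refine ⟨y, ⟨by simp, fun b => ?_⟩, fun γ η hc => hc g h P k hk x y hx hy⟩
    have : H.rel b y y → G.rel b x x := by
      intro hr
      obtain ⟨u, u', h1, h2, h3⟩ := M.relr _ _ P.1 b y y hr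
      have h1 := h1 k
      have h2 := h2 k
      simp [hx, hy] at h1 h2
      rwa [h1, h2] at h3
    exact ⟨this, this⟩
  · obtain ⟨k', hk', hne, -⟩ := M.fresh k k
    obtain ⟨y', T, hP, hyT, hpal, g1, h1, k1, hP1, hk1, hx1, hy1⟩ := M.core0 P hk' x'
    refine ⟨y', ⟨?_, fun b => ?_⟩, fun γ η hc => hc g1 h1 hP1 k1 hk1 x' y' hx1 hy1⟩
    · have := hpal k hne.symm
      simp only [hx, hy, Set.mem_singleton_iff] at this
      grind
    · constructor
      · intro hr
        obtain ⟨u, u', h1, h2, h3⟩ := M.relr _ _ hP.1 b _ _ hr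
        have h1 := h1 k
        have h2 := h2 k'
        simp [hx, hy, hne.symm, hyT] at h1 h2
        rwa [h1, h2] at h3
      · intro hr
        obtain ⟨u', u, h2, h1, h3⟩ := M.relr _ _ hP.1 b _ _ hr
        have h1 := h1 k
        have h2 := h2 k'
        simp [hx, hy, hne.symm, hyT] at h1 h2
        rwa [h1, h2] at h3

theorem MFSetup.final (M : MFSetup G H n Safe U g0 h0) {γ η} (C : MFCorr Safe U g0 h0 γ η)
    {g h} (P : MFPos Safe U g0 h0 g h) {k : Fin n} (hg : g k = γ) : h k = η := by
  obtain ⟨k', hk', hne, -⟩ := M.fresh k k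
  ext y
  obtain ⟨x, T, -, -, hpal, g1, h1, k1, hP1, hk1, hx1, hy1⟩ := M.symm.core0 P.symm hk' y
  have h2 := C _ _ hP1.symm k1 hk1 x y hy1 hx1
  rw [hpal k hne.symm, hg, h2]

end

/-- Corresponding atoms. -/
inductive MFAtom {V W F : Type} (R : V → W → Prop) : RbAtom V F → RbAtom W F → Prop
  | id : MFAtom R .id .id
  | black : MFAtom R .black .black
  | white : MFAtom R .white .white
  | yellow : MFAtom R .yellow .yellow
  | green (u : V) (v : W) : R u v → MFAtom R (.green u) (.green v)
  | red (j j' : F) : MFAtom R (.red j j') (.red j j')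

theorem MFAtom.mono {V W F : Type} {R R' : V → W → Prop} (hR : ∀ u v, R u v → R' u v)
    {a : RbAtom V F} {a' : RbAtom W F} (h : MFAtom R a a') : MFAtom R' a a' := by
  cases h <;> constructor
  exact hR _ _ ‹_›

theorem MFAtom.conv {V W F : Type} {R : V → W → Prop}
    {a : RbAtom V F} {a' : RbAtom W F} (h : MFAtom R a a') : MFAtom R a.conv a'.conv := by
  cases h <;> constructor
  exact ‹_›

theorem MFAtom.symm {V W F : Type} {R : V → W → Prop}
    {a : RbAtom V F} {a' : RbAtom W F} (h : MFAtom R a a') :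
    MFAtom (fun w v => R v w) a' a := by
  cases h <;> constructor
  exact ‹_›

theorem RbAtom.conv_conv {V F : Type} (a : RbAtom V F) : a.conv.conv = a := by
  cases a <;> rfl

/-- The two-point relation. -/
def MFTwo {V W : Type} (x : V) (y : W) (x' : V) (y' : W) (u : V) (v : W) : Prop :=
  (u = x ∧ v = y) ∨ (u = x' ∧ v = y')

/-- Relations between vertices along which allowed triples are transferred. -/
def MFGood (G H : BinStruct σ) (R : G.V → H.V → Prop) : Prop :=
  ∀ u v u' v', R u v → R u' v' →
    (u = u' ↔ v = v') ∧ ∀ b, u ≠ u' → H.rel b v v' → G.rel b u u'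

theorem MFPair.good {G H : BinStruct σ} {x : G.V} {y : H.V} {x' : G.V} {y' : H.V}
    (P : MFPair G H x y x' y') : MFGood G H (MFTwo x y x' y') := by
  obtain ⟨P1, P2⟩ := P
  intro u v u' v' h1 h2
  unfold MFTwo at h1 h2
  refine ⟨by grind, fun b => ?_⟩
  have := P2 b
  grind

theorem MFGood.base {G H F : BinStruct σ} {R : G.V → H.V → Prop}
    (P : MFGood G H R) {a b c : RbAtom G.V F.V} {a' b' c' : RbAtom H.V F.V}
    (ha : MFAtom R a a') (hb : MFAtom R b b')
    (hc : MFAtom R c c') (hf : BaseForbidden H F a' b' c') :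
    BaseForbidden G F a b c := by
  cases hf with
  | ident _ _ hne =>
    cases ha
    refine .ident _ _ ?_
    rintro rfl
    apply hne
    cases hb <;> cases hc <;> first | rfl | skip
    rename_i h1 _ h2
    congr 1
    exact (P _ _ _ _ h1 h2).1.1 rfl
  | ggg => cases ha; cases hb; cases hc; constructor
  | ggw => cases ha; cases hb; cases hc; constructor
  | yyy => cases ha; cases hb; cases hc; constructor
  | yyb => cases ha; cases hb; cases hc; constructor
  | rrr _ _ _ _ _ _ hn => cases ha; cases hb; cases hc; exact .rrr _ _ _ _ _ _ hn
  | ggr i i' j j' hn =>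
    cases hc
    cases ha with
    | green u v h1 =>
    cases hb with
    | green u' v' h2 =>
    refine .ggr _ _ _ _ ?_
    rintro ⟨hne, hp⟩
    apply hn
    obtain ⟨P1, P2⟩ := P _ _ _ _ h1 h2
    obtain ⟨-, P3⟩ := P _ _ _ _ h2 h1
    exact ⟨fun e => hne (P1.2 e), fun b => ⟨fun hr => (hp b).1 (P2 b hne hr),
      fun hr => (hp b).2 (P3 b hne.symm hr)⟩⟩

theorem MFGood.forb {G H F : BinStruct σ} {R : G.V → H.V → Prop}
    (P : MFGood G H R) {a b c : RbAtom G.V F.V} {a' b' c' : RbAtom H.V F.V}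
    (ha : MFAtom R a a') (hb : MFAtom R b b')
    (hc : MFAtom R c c') (hf : Forbidden H F a' b' c') :
    Forbidden G F a b c := by
  have hac := ha.conv
  have hbc := hb.conv
  have hcc := hc.conv
  obtain ⟨p, q, r, hB, h⟩ := hf
  simp only [Prod.mk.injEq] at h
  rcases h with ⟨rfl, rfl, rfl⟩ | ⟨rfl, rfl, rfl⟩ | ⟨rfl, rfl, rfl⟩ | ⟨rfl, rfl, rfl⟩ |
    ⟨rfl, rfl, rfl⟩ | ⟨rfl, rfl, rfl⟩ <;> try simp only [RbAtom.conv_conv] at hac hbc hcc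
  · exact ⟨a, b, c, P.base ha hb hc hB, by simp⟩
  · exact ⟨a.conv, c, b, P.base hac hc hb hB, by simp [RbAtom.conv_conv]⟩
  · exact ⟨c, b.conv, a, P.base hc hbc ha hB, by simp [RbAtom.conv_conv]⟩
  · exact ⟨b.conv, a.conv, c.conv, P.base hbc hac hcc hB, by simp [RbAtom.conv_conv]⟩
  · exact ⟨c.conv, a, b.conv, P.base hcc ha hbc hB, by simp [RbAtom.conv_conv]⟩
  · exact ⟨b, c.conv, a.conv, P.base hb hcc hac hB, by simp [RbAtom.conv_conv]⟩

/-- Elements of the two algebras having the same non-green part. -/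
def MFNon {V W F : Type} (X : Set (RbAtom V F)) (Y : Set (RbAtom W F)) : Prop :=
  ∀ a a', MFAtom (fun _ _ => False) a a' → (a ∈ X ↔ a' ∈ Y)

theorem MFNon.symm {V W F : Type} {X : Set (RbAtom V F)} {Y : Set (RbAtom W F)}
    (h : MFNon X Y) : MFNon Y X := fun a a' ha => (h a' a ha.symm).symm

theorem mf_green_or {V F : Type} (W : Type) (a : RbAtom V F) :
    (∃ i, a = .green i) ∨ ∃ a' : RbAtom W F, MFAtom (fun _ _ => False) a a' := by
  cases a
  · exact .inr ⟨_, .id⟩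
  · exact .inr ⟨_, .black⟩
  · exact .inr ⟨_, .white⟩
  · exact .inr ⟨_, .yellow⟩
  · exact .inl ⟨_, rfl⟩
  · exact .inr ⟨_, .red _ _⟩

theorem mf_ggg (G F : BinStruct σ) (i i' i'' : G.V) :
    Forbidden G F (.green i) (.green i') (.green i'') :=
  ⟨_, _, _, .ggg i i' i'', .inl rfl⟩

section
variable {G H F : BinStruct σ} {n : ℕ}
    {Safe : (Fin n → Set G.V) → (Fin n → Set H.V) → Prop} {U : Set (Fin n)}
    {g0 : Fin n → Set G.V} {h0 : Fin n → Set H.V}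

/-- Corresponding elements. -/
def MFElt (Safe : (Fin n → Set G.V) → (Fin n → Set H.V) → Prop) (U : Set (Fin n))
    (g0 : Fin n → Set G.V) (h0 : Fin n → Set H.V)
    (X : Set (RbAtom G.V F.V)) (Y : Set (RbAtom H.V F.V)) : Prop :=
  MFCorr Safe U g0 h0 (greenPart X) (greenPart Y) ∧ MFNon X Y

theorem MFElt.symm {X : Set (RbAtom G.V F.V)} {Y : Set (RbAtom H.V F.V)}
    (h : MFElt Safe U g0 h0 X Y) :
    MFElt (G := H) (H := G) (fun h g => Safe g h) U h0 g0 Y X :=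
  ⟨h.1.symm, h.2.symm⟩

theorem MFSetup.comp_green (M : MFSetup G H n Safe U g0 h0)
    {X X' : Set (RbAtom G.V F.V)} {Y Y' : Set (RbAtom H.V F.V)}
    (E : MFElt Safe U g0 h0 X Y) (E' : MFElt Safe U g0 h0 X' Y')
    {g h} (P : MFPos Safe U g0 h0 g h)
    {k : Fin n} (hk : k ∉ U) {x y} (hx : g k = {x}) (hy : h k = {y})
    (hm : RbAtom.green x ∈ rbComp G F X X') : RbAtom.green y ∈ rbComp H F Y Y' := by
  obtain ⟨a, ha, b, hb, hn⟩ := hm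
  rcases mf_green_or H.V a with ⟨i, rfl⟩ | ⟨a', ha'⟩
  · rcases mf_green_or H.V b with ⟨i', rfl⟩ | ⟨b', hb'⟩
    · exact absurd (mf_ggg G F i i' x) hn
    · obtain ⟨j, hp, hc⟩ := M.core P hk hx hy i
      exact ⟨.green j, (hc _ _ E.1).1 ha, b', (E'.2 _ _ hb').1 hb, fun hf => hn <|
        hp.good.forb (.green _ _ (.inr ⟨rfl, rfl⟩)) (hb'.mono (by simp))
          (.green _ _ (.inl ⟨rfl, rfl⟩)) hf⟩
  · rcases mf_green_or H.V b with ⟨i', rfl⟩ | ⟨b', hb'⟩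
    · obtain ⟨j, hp, hc⟩ := M.core P hk hx hy i'
      exact ⟨a', (E.2 _ _ ha').1 ha, .green j, (hc _ _ E'.1).1 hb, fun hf => hn <|
        hp.good.forb (ha'.mono (by simp)) (.green _ _ (.inr ⟨rfl, rfl⟩))
          (.green _ _ (.inl ⟨rfl, rfl⟩)) hf⟩
    · obtain ⟨j, hp, hc⟩ := M.core P hk hx hy x
      exact ⟨a', (E.2 _ _ ha').1 ha, b', (E'.2 _ _ hb').1 hb, fun hf => hn <|
        hp.good.forb (ha'.mono (by simp)) (hb'.mono (by simp))
          (.green _ _ (.inl ⟨rfl, rfl⟩)) hf⟩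

theorem MFSetup.comp_non (M : MFSetup G H n Safe U g0 h0) (k0 : Fin n)
    {X X' : Set (RbAtom G.V F.V)} {Y Y' : Set (RbAtom H.V F.V)}
    (E : MFElt Safe U g0 h0 X Y) (E' : MFElt Safe U g0 h0 X' Y')
    {e e'} (he : MFAtom (fun _ _ => False) e e')
    (hm : e ∈ rbComp G F X X') : e' ∈ rbComp H F Y Y' := by
  obtain ⟨a, ha, b, hb, hn⟩ := hm
  obtain ⟨k, hk, -, -⟩ := M.fresh k0 k0
  have P0 : MFPos Safe U g0 h0 g0 h0 := ⟨M.safe0, fun _ _ => ⟨rfl, rfl⟩⟩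
  rcases mf_green_or H.V a with ⟨i, rfl⟩ | ⟨a', ha'⟩
  · obtain ⟨j, T, -, -, -, g1, h1, k1, P1, hk1, hx1, hy1⟩ := M.core0 P0 hk i
    have hj := (E.1 _ _ P1 k1 hk1 _ _ hx1 hy1).1 ha
    rcases mf_green_or H.V b with ⟨i', rfl⟩ | ⟨b', hb'⟩
    · obtain ⟨j', hp, hc⟩ := M.core P1 hk1 hx1 hy1 i'
      exact ⟨.green j, hj, .green j', (hc _ _ E'.1).1 hb, fun hf => hn <|
        hp.good.forb (.green _ _ (.inl ⟨rfl, rfl⟩)) (.green _ _ (.inr ⟨rfl, rfl⟩))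
          (he.mono (by simp)) hf⟩
    · obtain ⟨j', hp, hc⟩ := M.core P1 hk1 hx1 hy1 i
      exact ⟨.green j, hj, b', (E'.2 _ _ hb').1 hb, fun hf => hn <|
        hp.good.forb (.green _ _ (.inl ⟨rfl, rfl⟩)) (hb'.mono (by simp))
          (he.mono (by simp)) hf⟩
  · rcases mf_green_or H.V b with ⟨i, rfl⟩ | ⟨b', hb'⟩
    · obtain ⟨j, T, -, -, -, g1, h1, k1, P1, hk1, hx1, hy1⟩ := M.core0 P0 hk i
      have hj := (E'.1 _ _ P1 k1 hk1 _ _ hx1 hy1).1 hb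
      obtain ⟨j', hp, hc⟩ := M.core P1 hk1 hx1 hy1 i
      exact ⟨a', (E.2 _ _ ha').1 ha, .green j, hj, fun hf => hn <|
        hp.good.forb (ha'.mono (by simp)) (.green _ _ (.inl ⟨rfl, rfl⟩))
          (he.mono (by simp)) hf⟩
    · refine ⟨a', (E.2 _ _ ha').1 ha, b', (E'.2 _ _ hb').1 hb, fun hf => hn ?_⟩
      exact MFGood.forb (fun _ _ _ _ h => h.elim) ha' hb' he hf

theorem MFSetup.comp_elt (M : MFSetup G H n Safe U g0 h0) (k0 : Fin n)
    {X X' : Set (RbAtom G.V F.V)} {Y Y' : Set (RbAtom H.V F.V)}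
    (E : MFElt Safe U g0 h0 X Y) (E' : MFElt Safe U g0 h0 X' Y') :
    MFElt Safe U g0 h0 (rbComp G F X X') (rbComp H F Y Y') :=
  ⟨fun _ _ P _ hk _ _ hx hy => ⟨M.comp_green E E' P hk hx hy,
      M.symm.comp_green E.symm E'.symm P.symm hk hy hx⟩,
    fun _ _ he => ⟨M.comp_non k0 E E' he, M.symm.comp_non k0 E.symm E'.symm he.symm⟩⟩

theorem MFSetup.term (M : MFSetup G H n Safe U g0 h0) (k0 : Fin n) {c : ℕ}
    {α : Fin c → Option (Set (RbAtom G.V F.V))} {β : Fin c → Option (Set (RbAtom H.V F.V))}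
    (hv : ∀ i X Y, α i = some X → β i = some Y → MFElt Safe U g0 h0 X Y)
    (t : RATerm c) : ∀ X Y, t.evalo (rbOps G F) α = some X → t.evalo (rbOps H F) β = some Y →
      MFElt Safe U g0 h0 X Y := by
  induction t with
  | var i => exact hv i
  | bot =>
    rintro X Y ⟨⟩ ⟨⟩
    exact ⟨fun _ _ _ _ _ _ _ _ _ => by simp [rbOps, greenPart], fun _ _ _ => by simp [rbOps]⟩
  | top =>
    rintro X Y ⟨⟩ ⟨⟩
    exact ⟨fun _ _ _ _ _ _ _ _ _ => by simp [rbOps, greenPart], fun _ _ _ => by simp [rbOps]⟩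
  | one' =>
    rintro X Y ⟨⟩ ⟨⟩
    refine ⟨fun _ _ _ _ _ _ _ _ _ => by simp [rbOps, greenPart], fun a a' h => ?_⟩
    cases h <;> simp_all [rbOps]
  | sup s t ihs iht =>
    intro X Y hX hY
    simp only [RATerm.evalo, Option.bind_eq_some_iff, Option.map_eq_some_iff] at hX hY
    obtain ⟨X1, h1, X2, h2, rfl⟩ := hX
    obtain ⟨Y1, h3, Y2, h4, rfl⟩ := hY
    have E1 := ihs _ _ h1 h3
    have E2 := iht _ _ h2 h4
    exact ⟨fun g h P k hk x y hx hy =>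
      or_congr (E1.1 g h P k hk x y hx hy) (E2.1 g h P k hk x y hx hy),
      fun a a' h => or_congr (E1.2 a a' h) (E2.2 a a' h)⟩
  | inf s t ihs iht =>
    intro X Y hX hY
    simp only [RATerm.evalo, Option.bind_eq_some_iff, Option.map_eq_some_iff] at hX hY
    obtain ⟨X1, h1, X2, h2, rfl⟩ := hX
    obtain ⟨Y1, h3, Y2, h4, rfl⟩ := hY
    have E1 := ihs _ _ h1 h3
    have E2 := iht _ _ h2 h4
    exact ⟨fun g h P k hk x y hx hy =>
      and_congr (E1.1 g h P k hk x y hx hy) (E2.1 g h P k hk x y hx hy),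
      fun a a' h => and_congr (E1.2 a a' h) (E2.2 a a' h)⟩
  | compl t iht =>
    intro X Y hX hY
    simp only [RATerm.evalo, Option.map_eq_some_iff] at hX hY
    obtain ⟨X1, h1, rfl⟩ := hX
    obtain ⟨Y1, h3, rfl⟩ := hY
    have E1 := iht _ _ h1 h3
    exact ⟨fun g h P k hk x y hx hy => not_congr (E1.1 g h P k hk x y hx hy),
      fun a a' h => not_congr (E1.2 a a' h)⟩
  | comp s t ihs iht =>
    intro X Y hX hY
    simp only [RATerm.evalo, Option.bind_eq_some_iff, Option.map_eq_some_iff] at hX hY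
    obtain ⟨X1, h1, X2, h2, rfl⟩ := hX
    obtain ⟨Y1, h3, Y2, h4, rfl⟩ := hY
    exact M.comp_elt k0 (ihs _ _ h1 h3) (iht _ _ h2 h4)
  | conv t iht =>
    intro X Y hX hY
    simp only [RATerm.evalo, Option.map_eq_some_iff] at hX hY
    obtain ⟨X1, h1, rfl⟩ := hX
    obtain ⟨Y1, h3, rfl⟩ := hY
    have E1 := iht _ _ h1 h3
    exact ⟨fun g h P k hk x y hx hy => E1.1 g h P k hk x y hx hy,
      fun a a' h => E1.2 _ _ h.conv⟩

end

theorem mf_xor {p q : Prop} (h : ¬ Xor p q) : p ↔ q := by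
  unfold Xor at h
  tauto

theorem mf_colwin_facts {G H : BinStruct σ} {n : ℕ} {g : Fin n → Set G.V} {h : Fin n → Set H.V}
    (hw : ¬ ColWin G H n g h) :
    (∀ x, ∃ y, ∀ t, x ∈ g t ↔ y ∈ h t) ∧ (∀ y, ∃ x, ∀ t, y ∈ h t ↔ x ∈ g t) ∧
    (∀ b x x', G.rel b x x' →
      ∃ y y', (∀ t, x ∈ g t ↔ y ∈ h t) ∧ (∀ t, x' ∈ g t ↔ y' ∈ h t) ∧ H.rel b y y') ∧
    (∀ b y y', H.rel b y y' →
      ∃ x x', (∀ t, y ∈ h t ↔ x ∈ g t) ∧ (∀ t, y' ∈ h t ↔ x' ∈ g t) ∧ G.rel b x x') := by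
  simp only [ColWin, not_or, not_exists] at hw
  obtain ⟨h1, h2⟩ := hw
  refine ⟨fun x => ?_, fun y => ?_, fun b x x' hr => ?_, fun b y y' hr => ?_⟩
  · have := (not_congr (mf_xor <| h1 {t | x ∈ g t})).1
      (Set.nonempty_iff_ne_empty.1 ⟨x, fun t => Iff.rfl⟩)
    obtain ⟨y, hy⟩ := Set.nonempty_iff_ne_empty.2 this
    exact ⟨y, fun t => (hy t).symm⟩
  · have := (not_congr (mf_xor <| h1 {t | y ∈ h t})).2
      (Set.nonempty_iff_ne_empty.1 ⟨y, fun t => Iff.rfl⟩)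
    obtain ⟨x, hx⟩ := Set.nonempty_iff_ne_empty.2 this
    exact ⟨x, fun t => (hx t).symm⟩
  · have := (not_congr (mf_xor <| h2 {t | x ∈ g t} {t | x' ∈ g t} b)).1
      (Set.nonempty_iff_ne_empty.1 ⟨(x, x'), ⟨fun t => Iff.rfl, fun t => Iff.rfl⟩, hr⟩)
    obtain ⟨⟨y, y'⟩, ⟨hy, hy'⟩, hr'⟩ := Set.nonempty_iff_ne_empty.2 this
    exact ⟨y, y', fun t => (hy t).symm, fun t => (hy' t).symm, hr'⟩
  · have := (not_congr (mf_xor <| h2 {t | y ∈ h t} {t | y' ∈ h t} b)).2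
      (Set.nonempty_iff_ne_empty.1 ⟨(y, y'), ⟨fun t => Iff.rfl, fun t => Iff.rfl⟩, hr⟩)
    obtain ⟨⟨x, x'⟩, ⟨hx, hx'⟩, hr'⟩ := Set.nonempty_iff_ne_empty.2 this
    exact ⟨x, x', fun t => (hx t).symm, fun t => (hx' t).symm, hr'⟩

theorem mf_inv_safe {G H : BinStruct σ} {n : ℕ}
    {Inv : (Fin n → Set G.V) → (Fin n → Set H.V) → Prop} (hI : IsColInvariant G H n Inv)
    {g h} (hw : AllForcesWin G H n g h) : ¬ Inv g h := by
  induction hw with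
  | now g h hw => exact fun hi => hI.2.1 _ _ hi hw
  | moveG g h t S _ ih =>
    intro hi
    obtain ⟨T, hT⟩ := hI.2.2.1 _ _ hi t S
    exact ih T hT
  | moveH g h t T _ ih =>
    intro hi
    obtain ⟨S, hS⟩ := hI.2.2.2 _ _ hi t T
    exact ih S hS

/-- Invariant of states reachable under the mirroring strategy. -/
def MFReach {G H F : BinStruct σ} {c : ℕ}
    (Inv : (Fin (c + 3) → Set G.V) → (Fin (c + 3) → Set H.V) → Prop)
    (s : MirrorState c G H F) : Prop :=
  Inv s.g s.h ∧ s.used ⊆ Set.range liftCol ∧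
  ∀ i X Y, s.α i = some X → s.β i = some Y →
    liftCol i ∈ s.used ∧ s.g (liftCol i) = greenPart X ∧ s.h (liftCol i) = greenPart Y ∧
    MFNon X Y

theorem mf_lift_inj {c : ℕ} {i j : Fin c} (h : liftCol i = liftCol j) : i = j :=
  Fin.castLE_injective _ h

theorem mf_mirror_non {V W F : Type} (x : Set (RbAtom V F)) (Y : Set W) :
    MFNon x (mirrorElt x Y) := by
  intro a a' h
  cases h <;> first | exact Iff.rfl | exact absurd ‹False› id

theorem mf_reach {G H F : BinStruct σ} {c : ℕ}
    {Inv : (Fin (c + 3) → Set G.V) → (Fin (c + 3) → Set H.V) → Prop}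
    (hI : IsColInvariant G H (c + 3) Inv)
    {s : MirrorState c G H F} (hs : MirrorReachable G H F c Inv s) : MFReach Inv s := by
  induction hs with
  | refl => exact ⟨hI.1, by simp [mirrorInit], fun i X Y h => by simp [mirrorInit] at h⟩
  | tail _ hstep ih =>
    obtain ⟨-, i2, i3⟩ := ih
    cases hstep with
    | fromG t x Y hi =>
      refine ⟨hi, Set.insert_subset ⟨t, rfl⟩ i2, fun i X' Y' hX hY => ?_⟩
      by_cases hit : i = t
      · subst hit
        simp only [Function.update_self, Option.some.injEq] at hX hY
        subst hX hY
        refine ⟨Set.mem_insert _ _, Function.update_self .., Function.update_self .., mf_mirror_non _ _⟩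
      · have hl : liftCol i ≠ liftCol t := fun e => hit (mf_lift_inj e)
        simp only [Function.update_of_ne hit] at hX hY
        obtain ⟨j1, j2⟩ := i3 i X' Y' hX hY
        simp only [Function.update_of_ne hl]
        exact ⟨Set.mem_insert_of_mem _ j1, j2⟩
    | fromH t y X hi =>
      refine ⟨hi, Set.insert_subset ⟨t, rfl⟩ i2, fun i X' Y' hX hY => ?_⟩
      by_cases hit : i = t
      · subst hit
        simp only [Function.update_self, Option.some.injEq] at hX hY
        subst hX hY
        refine ⟨Set.mem_insert _ _, Function.update_self .., Function.update_self .., (mf_mirror_non _ _).symm⟩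
      · have hl : liftCol i ≠ liftCol t := fun e => hit (mf_lift_inj e)
        simp only [Function.update_of_ne hit] at hX hY
        obtain ⟨j1, j2⟩ := i3 i X' Y' hX hY
        simp only [Function.update_of_ne hl]
        exact ⟨Set.mem_insert_of_mem _ j1, j2⟩

theorem mf_setup {G H F : BinStruct σ} {c : ℕ}
    {Inv : (Fin (c + 3) → Set G.V) → (Fin (c + 3) → Set H.V) → Prop}
    (hI : IsColInvariant G H (c + 3) Inv)
    {s : MirrorState c G H F} (hs : MFReach Inv s) :
    MFSetup G H (c + 3) (fun g h => ¬ AllForcesWin G H (c + 3) g h) s.used s.g s.h where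
  safe0 := fun hw => mf_inv_safe hI hw hs.1
  forth := by
    intro g h hs t S
    by_contra hcon
    push Not at hcon
    exact hs (.moveG g h t S hcon)
  back := by
    intro g h hs t S
    by_contra hcon
    push Not at hcon
    exact hs (.moveH g h t S hcon)
  pal := fun g h hs => (mf_colwin_facts fun hw => hs (.now g h hw)).1
  palr := fun g h hs => (mf_colwin_facts fun hw => hs (.now g h hw)).2.1
  rel := fun g h hs => (mf_colwin_facts fun hw => hs (.now g h hw)).2.2.1
  relr := fun g h hs => (mf_colwin_facts fun hw => hs (.now g h hw)).2.2.2
  fresh := by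
    intro k1 k2
    have key : ∀ m : ℕ, c ≤ m → (hm : m < c + 3) → (⟨m, hm⟩ : Fin (c + 3)) ∉ s.used := by
      intro m h1 hm hu
      obtain ⟨i, hi⟩ := hs.2.1 hu
      have := congrArg Fin.val hi
      simp [liftCol] at this
      omega
    have : ∃ m : ℕ, c ≤ m ∧ m < c + 3 ∧ m ≠ k1.1 ∧ m ≠ k2.1 := by
      by_cases h0 : c ≠ k1.1 ∧ c ≠ k2.1
      · exact ⟨c, by omega, by omega, h0⟩
      by_cases h1 : c + 1 ≠ k1.1 ∧ c + 1 ≠ k2.1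
      · exact ⟨c + 1, by omega, by omega, h1⟩
      exact ⟨c + 2, by omega, by omega, by omega, by omega⟩
    obtain ⟨m, h1, h2, h3, h4⟩ := this
    exact ⟨⟨m, h2⟩, key m h1 h2, fun e => h3 (congrArg Fin.val e), fun e => h4 (congrArg Fin.val e)⟩

theorem mirror_fresh_colour_forced {σ : Type} (G H F : BinStruct σ) (c : ℕ)
    (Inv : (Fin (c + 3) → Set G.V) → (Fin (c + 3) → Set H.V) → Prop)
    (hInv : IsColInvariant G H (c + 3) Inv)
    (s : MirrorState c G H F) (hs : MirrorReachable G H F c Inv s)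
    (t : RATerm c) (X : Set (RbAtom G.V F.V)) (Y : Set (RbAtom H.V F.V))
    (hX : t.evalo (rbOps G F) s.α = some X) (hY : t.evalo (rbOps H F) s.β = some Y)
    (k : Fin (c + 3)) (hk : k ∉ s.used) :
    (∀ T : Set H.V, T ≠ greenPart Y →
        AllForcesWin G H (c + 3)
          (Function.update s.g k (greenPart X)) (Function.update s.h k T)) ∧
    (∀ S : Set G.V, S ≠ greenPart X →
        AllForcesWin G H (c + 3)
          (Function.update s.g k S) (Function.update s.h k (greenPart Y))) := by
  have hR := mf_reach hInv hs
  have M := mf_setup hInv hR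
  have hE := M.term k (F := F) (α := s.α) (β := s.β) (fun i X Y hX hY => by
    obtain ⟨h1, h2, h3, h4⟩ := hR.2.2 i X Y hX hY
    refine ⟨fun g h P k hk x y hx hy => ?_, h4⟩
    rw [← h2, ← h3, ← (P.2 _ h1).1, ← (P.2 _ h1).2]
    obtain ⟨y', hy'⟩ := M.pal _ _ P.1 x
    have := hy' k
    simp [hx, hy] at this
    subst this
    exact hy' _) t X Y hX hY
  have P0 : MFPos (fun g h => ¬ AllForcesWin G H (c + 3) g h) s.used s.g s.h s.g s.h :=
    ⟨M.safe0, fun _ _ => ⟨rfl, rfl⟩⟩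
  constructor
  · intro T hT
    by_contra hcon
    apply hT
    simpa using M.final hE.1 (P0.update hk hcon) (k := k) (by simp)
  · intro S hS
    by_contra hcon
    apply hS
    simpa using M.symm.final hE.1.symm (P0.update hk hcon).symm (k := k) (by simp)
end

section
/- Let G, H, F be binary structures and let c < ω. If ∃ has a winning strategy in the colouring game G^{c+3}_ω(G,H), then for every n < ω she has a winning strategy in the pebble game Γ^c_n(B_{G,F}, B_{H,F}) started from the empty position. -/
variable {σ : Type}

/-! ## Proof: atom bisimulations -/

/-- Atoms related by identity on non-green atoms and by `P` on green subscripts. -/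
inductive AtomRel {α β γ : Type} (P : α → β → Prop) : RbAtom α γ → RbAtom β γ → Prop
  | id : AtomRel P .id .id
  | black : AtomRel P .black .black
  | white : AtomRel P .white .white
  | yellow : AtomRel P .yellow .yellow
  | green (i : α) (j : β) : P i j → AtomRel P (.green i) (.green j)
  | red (j j' : γ) : AtomRel P (.red j j') (.red j j')

theorem AtomRel.flip {α β γ : Type} {P : α → β → Prop} {a : RbAtom α γ} {b : RbAtom β γ}
    (h : AtomRel P a b) : AtomRel (fun y x => P x y) b a := by
  cases h <;> constructor <;> assumption

theorem AtomRel.mono {α β γ : Type} {P Q : α → β → Prop} (hPQ : ∀ x y, P x y → Q x y)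
    {a : RbAtom α γ} {b : RbAtom β γ}
    (h : AtomRel P a b) : AtomRel Q a b := by
  cases h <;> constructor
  apply hPQ; assumption

theorem AtomRel.conv {α β γ : Type} {P : α → β → Prop} {a : RbAtom α γ} {b : RbAtom β γ}
    (h : AtomRel P a b) : AtomRel P a.conv b.conv := by
  cases h <;> constructor <;> assumption

theorem rb_conv_conv {α β : Type} (a : RbAtom α β) : a.conv.conv = a := by
  cases a <;> rfl

/-- Two pairs have the same type. -/
def SameType (G H : BinStruct σ) (i k : G.V) (j l : H.V) : Prop :=
  (i = k ↔ j = l) ∧ ∀ b, (G.rel b i k ↔ H.rel b j l) ∧ (G.rel b k i ↔ H.rel b l j)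

/-- `P` preserves types of distinct pairs. -/
def TypePres (G H : BinStruct σ) (P : G.V → H.V → Prop) : Prop :=
  ∀ i j k l, P i j → P k l → (i = k ↔ j = l) ∧
    (i ≠ k → ∀ b, (G.rel b i k ↔ H.rel b j l) ∧ (G.rel b k i ↔ H.rel b l j))

theorem TypePres.flip {G H : BinStruct σ} {P : G.V → H.V → Prop} (h : TypePres G H P) :
    TypePres H G (fun y x => P x y) := by
  intro i j k l h1 h2
  have := h j i l k h1 h2
  refine ⟨this.1.symm, fun hne b => ?_⟩
  have h3 := this.2 (fun e => hne (this.1.1 e)) b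
  exact ⟨h3.1.symm, h3.2.symm⟩

theorem AtomRel.eq_iff {G H : BinStruct σ} {γ : Type} {P : G.V → H.V → Prop}
    (hP : TypePres G H P) {a b : RbAtom G.V γ} {a' b' : RbAtom H.V γ}
    (h : AtomRel P a a') (h' : AtomRel P b b') (e : a' = b') : a = b := by
  subst e
  cases h <;> cases h' <;> try rfl
  rename_i i j h1 k h2
  rw [(hP _ _ _ _ h1 h2).1.2 rfl]

theorem baseForbidden_transfer {G H F : BinStruct σ} {P : G.V → H.V → Prop}
    (hP : TypePres G H P) {a b c : RbAtom G.V F.V} {a' b' c' : RbAtom H.V F.V}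
    (ha : AtomRel P a a') (hb : AtomRel P b b') (hc : AtomRel P c c')
    (h : BaseForbidden G F a b c) : BaseForbidden H F a' b' c' := by
  cases h with
  | ident _ _ hne =>
    cases ha
    exact .ident _ _ (fun e => hne (AtomRel.eq_iff hP hb hc e))
  | ggg => cases ha; cases hb; cases hc; constructor
  | ggw => cases ha; cases hb; cases hc; constructor
  | yyy => cases ha; cases hb; cases hc; constructor
  | yyb => cases ha; cases hb; cases hc; constructor
  | rrr _ _ _ _ _ _ hn => cases ha; cases hb; cases hc; constructor; exact hn
  | ggr i i' j j' hn =>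
    cases ha with | green _ k h1 =>
    cases hb with | green _ l h2 =>
    cases hc
    constructor
    rintro ⟨hne, hom⟩
    have := hP _ _ _ _ h1 h2
    have hne' : i ≠ i' := fun e => hne (this.1.1 e)
    refine hn ⟨hne', fun b => ?_⟩
    have h3 := this.2 hne' b
    rw [h3.1, h3.2]
    exact hom b

theorem forbidden_transfer {G H F : BinStruct σ} {P : G.V → H.V → Prop}
    (hP : TypePres G H P) {a b c : RbAtom G.V F.V} {a' b' c' : RbAtom H.V F.V}
    (ha : AtomRel P a a') (hb : AtomRel P b b') (hc : AtomRel P c c')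
    (h : Forbidden G F a b c) : Forbidden H F a' b' c' := by
  obtain ⟨x, y, z, hB, h⟩ := h
  simp only [Prod.mk.injEq] at h
  rcases h with h | h | h | h | h | h <;> obtain ⟨rfl, rfl, rfl⟩ := h
  · exact ⟨a', b', c', baseForbidden_transfer hP ha hb hc hB, by simp⟩
  · refine ⟨a'.conv, c', b', baseForbidden_transfer hP ?_ hc hb hB, by simp [rb_conv_conv]⟩
    simpa [rb_conv_conv] using ha.conv
  · refine ⟨c', b'.conv, a', baseForbidden_transfer hP hc ?_ ha hB, by simp [rb_conv_conv]⟩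
    simpa [rb_conv_conv] using hb.conv
  · refine ⟨b'.conv, a'.conv, c'.conv, baseForbidden_transfer hP ?_ ?_ ?_ hB,
      by simp [rb_conv_conv]⟩
    · simpa [rb_conv_conv] using hb.conv
    · simpa [rb_conv_conv] using ha.conv
    · simpa [rb_conv_conv] using hc.conv
  · refine ⟨c'.conv, a', b'.conv, baseForbidden_transfer hP ?_ ha ?_ hB,
      by simp [rb_conv_conv]⟩
    · simpa [rb_conv_conv] using hc.conv
    · simpa [rb_conv_conv] using hb.conv
  · refine ⟨b', c'.conv, a'.conv, baseForbidden_transfer hP hb ?_ ?_ hB,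
      by simp [rb_conv_conv]⟩
    · simpa [rb_conv_conv] using hc.conv
    · simpa [rb_conv_conv] using ha.conv

/-- One direction of a two-pebble bisimulation. -/
structure Sim (G H : BinStruct σ) (Z : G.V → H.V → Prop) : Prop where
  total : ∀ i, ∃ j, Z i j
  forth : ∀ i j, Z i j → ∀ k, ∃ l, Z k l ∧ SameType G H i k j l

/-- The relation with the two given pairs. -/
def TwoRel {α β : Type} (i k : α) (j l : β) (x : α) (y : β) : Prop :=
  (x = i ∧ y = j) ∨ (x = k ∧ y = l)

theorem typePres_two {G H : BinStruct σ} {i k : G.V} {j l : H.V}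
    (h : SameType G H i k j l) : TypePres G H (TwoRel i k j l) := by
  obtain ⟨h1, h2⟩ := h
  rintro a b c d (⟨rfl, rfl⟩ | ⟨rfl, rfl⟩) (⟨rfl, rfl⟩ | ⟨rfl, rfl⟩)
  · simp
  · exact ⟨h1, fun _ => h2⟩
  · exact ⟨by rw [eq_comm, h1, eq_comm], fun _ b => (h2 b).symm⟩
  · simp

theorem zigzag {G H F : BinStruct σ} {Z : G.V → H.V → Prop} (hZ : Sim G H Z)
    {a b c : RbAtom G.V F.V} {c' : RbAtom H.V F.V} (hc : AtomRel Z c c')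
    (hn : ¬ Forbidden G F a b c) :
    ∃ a' b', AtomRel Z a a' ∧ AtomRel Z b b' ∧ ¬ Forbidden H F a' b' c' := by
  -- it suffices to find a finite type-preserving piece
  suffices hs : ∃ P : G.V → H.V → Prop, TypePres G H P ∧ (∀ x y, P x y → Z x y) ∧
      ∃ a' b', AtomRel P a a' ∧ AtomRel P b b' ∧ AtomRel P c c' by
    obtain ⟨P, hP, hPZ, a', b', ha, hb, hc⟩ := hs
    exact ⟨a', b', ha.mono hPZ, hb.mono hPZ, fun h =>
      hn (forbidden_transfer hP.flip ha.flip hb.flip hc.flip h)⟩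
  have key : ∀ i j k l, Z i j → Z k l → SameType G H i k j l →
      (∃ a' b', AtomRel (TwoRel i k j l) a a' ∧ AtomRel (TwoRel i k j l) b b' ∧
        AtomRel (TwoRel i k j l) c c') →
      ∃ P : G.V → H.V → Prop, TypePres G H P ∧ (∀ x y, P x y → Z x y) ∧
      ∃ a' b', AtomRel P a a' ∧ AtomRel P b b' ∧ AtomRel P c c' := by
    intro i j k l h1 h2 h3 h4
    refine ⟨_, typePres_two h3, ?_, h4⟩
    rintro x y (⟨rfl, rfl⟩ | ⟨rfl, rfl⟩) <;> assumption
  have nongreen : ∀ d : RbAtom G.V F.V, (∃ i, d = .green i) ∨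
      ∃ d', ∀ P : G.V → H.V → Prop, AtomRel P d d' := by
    intro d
    cases d with
    | green i => exact Or.inl ⟨i, rfl⟩
    | id => exact Or.inr ⟨_, fun P => .id⟩
    | black => exact Or.inr ⟨_, fun P => .black⟩
    | white => exact Or.inr ⟨_, fun P => .white⟩
    | yellow => exact Or.inr ⟨_, fun P => .yellow⟩
    | red j j' => exact Or.inr ⟨_, fun P => .red j j'⟩
  have cdich : (∃ k l, c = .green k ∧ c' = .green l ∧ Z k l) ∨
      ∀ P : G.V → H.V → Prop, AtomRel P c c' := by
    cases hc with
    | green k l h => exact Or.inl ⟨k, l, rfl, rfl, h⟩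
    | id => exact Or.inr fun P => .id
    | black => exact Or.inr fun P => .black
    | white => exact Or.inr fun P => .white
    | yellow => exact Or.inr fun P => .yellow
    | red j j' => exact Or.inr fun P => .red j j'
  have same : ∀ i k : G.V, ∃ j l, Z i j ∧ Z k l ∧ SameType G H i k j l := by
    intro i k
    obtain ⟨j, hj⟩ := hZ.total i
    obtain ⟨l, hl, hs⟩ := hZ.forth i j hj k
    exact ⟨j, l, hj, hl, hs⟩
  rcases cdich with ⟨k, l, rfl, rfl, hkl⟩ | hc'
  · have fin : ∀ i, ∃ j, Z i j ∧ SameType G H k i l j := hZ.forth k l hkl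
    have gc : ∀ i j, AtomRel (γ := F.V) (TwoRel k i l j) (.green k) (.green l) :=
      fun i j => .green _ _ (Or.inl ⟨rfl, rfl⟩)
    rcases nongreen a with ⟨i, rfl⟩ | ⟨a', ha⟩ <;> rcases nongreen b with ⟨m, rfl⟩ | ⟨b', hb⟩
    · exact absurd ⟨_, _, _, .ggg i m k, Or.inl rfl⟩ hn
    · obtain ⟨j, hj, hs⟩ := fin i
      exact key _ _ _ _ hkl hj hs ⟨.green j, b', .green _ _ (Or.inr ⟨rfl, rfl⟩), hb _, gc _ _⟩
    · obtain ⟨j, hj, hs⟩ := fin m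
      exact key _ _ _ _ hkl hj hs ⟨a', .green j, ha _, .green _ _ (Or.inr ⟨rfl, rfl⟩), gc _ _⟩
    · obtain ⟨j, hj, hs⟩ := fin k
      exact key _ _ _ _ hkl hj hs ⟨a', b', ha _, hb _, gc _ _⟩
  · rcases nongreen a with ⟨i, rfl⟩ | ⟨a', ha⟩ <;> rcases nongreen b with ⟨m, rfl⟩ | ⟨b', hb⟩
    · obtain ⟨j, l, hj, hl, hs⟩ := same i m
      exact key _ _ _ _ hj hl hs ⟨.green j, .green l, .green _ _ (Or.inl ⟨rfl, rfl⟩),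
        .green _ _ (Or.inr ⟨rfl, rfl⟩), hc' _⟩
    · obtain ⟨j, l, hj, hl, hs⟩ := same i i
      exact key _ _ _ _ hj hl hs ⟨.green j, b', .green _ _ (Or.inl ⟨rfl, rfl⟩), hb _, hc' _⟩
    · obtain ⟨j, l, hj, hl, hs⟩ := same m m
      exact key _ _ _ _ hj hl hs ⟨a', .green j, ha _, .green _ _ (Or.inl ⟨rfl, rfl⟩), hc' _⟩
    · exact ⟨fun _ _ => False, fun _ _ _ _ h => h.elim, fun _ _ h => h.elim,
        a', b', ha _, hb _, hc' (fun _ _ => False)⟩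

/-- Related elements of the two algebras. -/
def EltRel {α β γ : Type} (Z : α → β → Prop) (x : Set (RbAtom α γ)) (y : Set (RbAtom β γ)) :
    Prop :=
  ∀ a b, AtomRel Z a b → (a ∈ x ↔ b ∈ y)

theorem EltRel.flip {α β γ : Type} {Z : α → β → Prop} {x : Set (RbAtom α γ)}
    {y : Set (RbAtom β γ)} (h : EltRel Z x y) : EltRel (fun b a => Z a b) y x :=
  fun a b hab => (h b a hab.flip).symm

theorem comp_mem {G H F : BinStruct σ} {Z : G.V → H.V → Prop} (hZ : Sim G H Z)
    {x₁ x₂ : Set (RbAtom G.V F.V)} {y₁ y₂ : Set (RbAtom H.V F.V)}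
    (h₁ : EltRel Z x₁ y₁) (h₂ : EltRel Z x₂ y₂) {c : RbAtom G.V F.V} {c' : RbAtom H.V F.V}
    (hc : AtomRel Z c c') (hm : c ∈ rbComp G F x₁ x₂) : c' ∈ rbComp H F y₁ y₂ := by
  obtain ⟨a, ha, b, hb, hn⟩ := hm
  obtain ⟨a', b', haa, hbb, hn'⟩ := zigzag hZ hc hn
  exact ⟨a', (h₁ _ _ haa).1 ha, b', (h₂ _ _ hbb).1 hb, hn'⟩

theorem comp_rel {G H F : BinStruct σ} {Z : G.V → H.V → Prop} (hZ : Sim G H Z)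
    (hZ' : Sim H G (fun b a => Z a b))
    {x₁ x₂ : Set (RbAtom G.V F.V)} {y₁ y₂ : Set (RbAtom H.V F.V)}
    (h₁ : EltRel Z x₁ y₁) (h₂ : EltRel Z x₂ y₂) :
    EltRel Z (rbComp G F x₁ x₂) (rbComp H F y₁ y₂) :=
  fun _ _ hab => ⟨comp_mem hZ h₁ h₂ hab, comp_mem hZ' h₁.flip h₂.flip hab.flip⟩

/-- Both undefined or both defined and related. -/
def OptRel {A B : Type} (R : A → B → Prop) (x : Option A) (y : Option B) : Prop :=
  (x = none ∧ y = none) ∨ ∃ a b, x = some a ∧ y = some b ∧ R a b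

theorem optRel_bind {A B A' B' A'' B'' : Type} {R : A → B → Prop} {R' : A' → B' → Prop}
    {R'' : A'' → B'' → Prop} {f : A → A' → A''} {f' : B → B' → B''}
    (hf : ∀ a b a' b', R a b → R' a' b' → R'' (f a a') (f' b b'))
    {x : Option A} {y : Option B} {x' : Option A'} {y' : Option B'}
    (h : OptRel R x y) (h' : OptRel R' x' y') :
    OptRel R'' (x.bind fun a => x'.map fun b => f a b) (y.bind fun a => y'.map fun b => f' a b) := by
  rcases h with ⟨rfl, rfl⟩ | ⟨a, b, rfl, rfl, h⟩
  · exact Or.inl ⟨rfl, rfl⟩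
  rcases h' with ⟨rfl, rfl⟩ | ⟨a', b', rfl, rfl, h'⟩
  · exact Or.inl ⟨rfl, rfl⟩
  · exact Or.inr ⟨_, _, rfl, rfl, hf _ _ _ _ h h'⟩

theorem optRel_map {A B A' B' : Type} {R : A → B → Prop} {R' : A' → B' → Prop}
    {f : A → A'} {f' : B → B'}
    (hf : ∀ a b, R a b → R' (f a) (f' b))
    {x : Option A} {y : Option B} (h : OptRel R x y) :
    OptRel R' (x.map f) (y.map f') := by
  rcases h with ⟨rfl, rfl⟩ | ⟨a, b, rfl, rfl, h⟩
  · exact Or.inl ⟨rfl, rfl⟩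
  · exact Or.inr ⟨_, _, rfl, rfl, hf _ _ h⟩

theorem evalo_rel {G H F : BinStruct σ} {Z : G.V → H.V → Prop} (hZ : Sim G H Z)
    (hZ' : Sim H G (fun b a => Z a b)) {c : ℕ}
    {α : Fin c → Option (Set (RbAtom G.V F.V))} {β : Fin c → Option (Set (RbAtom H.V F.V))}
    (hαβ : ∀ t, OptRel (EltRel Z) (α t) (β t)) (s : RATerm c) :
    OptRel (EltRel Z) (s.evalo (rbOps G F) α) (s.evalo (rbOps H F) β) := by
  induction s with
  | var i => exact hαβ i
  | bot => exact Or.inr ⟨_, _, rfl, rfl, fun a b _ => by simp [rbOps]⟩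
  | top => exact Or.inr ⟨_, _, rfl, rfl, fun a b _ => by simp [rbOps]⟩
  | one' => exact Or.inr ⟨_, _, rfl, rfl, fun a b h => by cases h <;> simp [rbOps]⟩
  | sup s t ihs iht =>
    refine optRel_bind (fun a b a' b' h h' u v huv => ?_) ihs iht
    exact or_congr (h u v huv) (h' u v huv)
  | inf s t ihs iht =>
    refine optRel_bind (fun a b a' b' h h' u v huv => ?_) ihs iht
    exact and_congr (h u v huv) (h' u v huv)
  | compl t iht =>
    exact optRel_map (fun a b h u v huv => not_congr (h u v huv)) iht
  | comp s t ihs iht =>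
    exact optRel_bind (R := EltRel Z) (R' := EltRel Z)
      (fun a b a' b' h h' => comp_rel hZ hZ' h h') ihs iht
  | conv t iht =>
    exact optRel_map (fun a b h u v huv => h _ _ huv.conv) iht

theorem atom_total {G H F : BinStruct σ} {Z : G.V → H.V → Prop} (hZ : Sim G H Z)
    (a : RbAtom G.V F.V) : ∃ b : RbAtom H.V F.V, AtomRel Z a b := by
  cases a with
  | green i => obtain ⟨j, hj⟩ := hZ.total i; exact ⟨_, .green _ _ hj⟩
  | id => exact ⟨_, .id⟩
  | black => exact ⟨_, .black⟩
  | white => exact ⟨_, .white⟩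
  | yellow => exact ⟨_, .yellow⟩
  | red j j' => exact ⟨_, .red j j'⟩

theorem eltRel_eq {G H F : BinStruct σ} {Z : G.V → H.V → Prop} (hZ : Sim G H Z)
    {x x' : Set (RbAtom G.V F.V)} {y y' : Set (RbAtom H.V F.V)}
    (h : EltRel Z x y) (h' : EltRel Z x' y') (e : y = y') : x = x' := by
  subst e
  ext a
  obtain ⟨b, hb⟩ := atom_total (F := F) hZ a
  rw [h a b hb, h' a b hb]

theorem goodPos_of_sim {G H F : BinStruct σ} {Z : G.V → H.V → Prop} (hZ : Sim G H Z)
    (hZ' : Sim H G (fun b a => Z a b)) {c : ℕ}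
    {α : Fin c → Option (Set (RbAtom G.V F.V))} {β : Fin c → Option (Set (RbAtom H.V F.V))}
    (hαβ : ∀ t, OptRel (EltRel Z) (α t) (β t)) :
    GoodPos (rbOps G F) (rbOps H F) c α β := by
  constructor
  · intro i
    rcases hαβ i with ⟨h1, h2⟩ | ⟨a, b, h1, h2, _⟩ <;> simp [h1, h2]
  · intro s t
    rcases evalo_rel hZ hZ' hαβ s with ⟨h1, h2⟩ | ⟨a, b, h1, h2, h3⟩ <;>
    rcases evalo_rel hZ hZ' hαβ t with ⟨h1', h2'⟩ | ⟨a', b', h1', h2', h3'⟩ <;>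
    simp only [h1, h2, h1', h2', reduceCtorEq, Option.some.injEq]
    have back := eltRel_eq hZ h3 h3'
    exact ⟨eltRel_eq hZ' h3.flip h3'.flip, back⟩

/-! ## Proof: from the colouring game to a bisimulation -/

/-- One half of the negation of `ColWin`. -/
def ColOK (G H : BinStruct σ) {c : ℕ} (g : Fin c → Set G.V) (h : Fin c → Set H.V) : Prop :=
  (∀ x, ∃ y, ∀ t, x ∈ g t ↔ y ∈ h t) ∧
  ∀ b x x', G.rel b x x' → ∃ y y', (∀ t, x ∈ g t ↔ y ∈ h t) ∧ (∀ t, x' ∈ g t ↔ y' ∈ h t) ∧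
    H.rel b y y'

theorem colOK_aux {G H : BinStruct σ} {c : ℕ} {g : Fin c → Set G.V} {h : Fin c → Set H.V}
    (h1 : ∀ π, PaletteSet h π = ∅ → PaletteSet g π = ∅)
    (h2 : ∀ π π' b, (PaletteSet h π ×ˢ PaletteSet h π') ∩ {q | H.rel b q.1 q.2} = ∅ →
      (PaletteSet g π ×ˢ PaletteSet g π') ∩ {q | G.rel b q.1 q.2} = ∅) : ColOK G H g h := by
  constructor
  · intro x
    have hx : x ∈ PaletteSet g {t | x ∈ g t} := fun t => Iff.rfl
    by_contra hc
    have : PaletteSet h {t | x ∈ g t} = ∅ := by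
      rw [Set.eq_empty_iff_forall_notMem]
      intro y hy
      exact hc ⟨y, fun t => (hy t).symm⟩
    rw [h1 _ this] at hx
    exact hx
  · intro b x x' hr
    have hx : (x, x') ∈ (PaletteSet g {t | x ∈ g t} ×ˢ PaletteSet g {t | x' ∈ g t}) ∩
        {q | G.rel b q.1 q.2} := ⟨⟨fun t => Iff.rfl, fun t => Iff.rfl⟩, hr⟩
    by_contra hc
    have : (PaletteSet h {t | x ∈ g t} ×ˢ PaletteSet h {t | x' ∈ g t}) ∩
        {q | H.rel b q.1 q.2} = ∅ := by
      rw [Set.eq_empty_iff_forall_notMem]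
      rintro ⟨y, y'⟩ ⟨⟨hy, hy'⟩, hyr⟩
      exact hc ⟨y, y', fun t => (hy t).symm, fun t => (hy' t).symm, hyr⟩
    rw [h2 _ _ _ this] at hx
    exact hx

theorem colOK_of_not {G H : BinStruct σ} {c : ℕ} {g : Fin c → Set G.V} {h : Fin c → Set H.V}
    (hn : ¬ ColWin G H c g h) : ColOK G H g h ∧ ColOK H G h g := by
  have hx : ∀ p q : Prop, ¬ ((p ∧ ¬ q) ∨ (q ∧ ¬ p)) → (p ↔ q) := fun p q => by tauto
  replace hn := And.intro (fun π => hx _ _ fun e => hn (Or.inl ⟨π, e⟩))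
    (fun π π' b => hx _ _ fun e => hn (Or.inr ⟨π, π', b, e⟩))
  exact ⟨colOK_aux (fun π => (hn.1 π).2) (fun π π' b => (hn.2 π π' b).2),
    colOK_aux (fun π => (hn.1 π).1) (fun π π' b => (hn.2 π π' b).1)⟩

/-- A winning invariant in symmetric form. -/
structure Strat (G H : BinStruct σ) (c : ℕ)
    (Inv : (Fin c → Set G.V) → (Fin c → Set H.V) → Prop) : Prop where
  ok : ∀ g h, Inv g h → ColOK G H g h
  ok' : ∀ g h, Inv g h → ColOK H G h g
  forth : ∀ g h, Inv g h → ∀ t S, ∃ T, Inv (Function.update g t S) (Function.update h t T)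
  back : ∀ g h, Inv g h → ∀ t T, ∃ S, Inv (Function.update g t S) (Function.update h t T)

theorem Strat.flip {G H : BinStruct σ} {c : ℕ}
    {Inv : (Fin c → Set G.V) → (Fin c → Set H.V) → Prop} (hS : Strat G H c Inv) :
    Strat H G c (fun h g => Inv g h) :=
  ⟨fun h g => hS.ok' g h, fun h g => hS.ok g h, fun h g => hS.back g h, fun h g => hS.forth g h⟩

theorem Strat.pick {G H : BinStruct σ} {c : ℕ}
    {Inv : (Fin c → Set G.V) → (Fin c → Set H.V) → Prop} (hS : Strat G H c Inv)
    {g : Fin c → Set G.V} {h : Fin c → Set H.V} (hI : Inv g h) {u v : Fin c} (huv : v ≠ u)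
    (i : G.V) : ∃ j : H.V, Inv (Function.update g u {i}) (Function.update h u {j}) := by
  obtain ⟨T, hT⟩ := hS.forth g h hI u {i}
  obtain ⟨j, hj⟩ := (hS.ok _ _ hT).1 i
  have hjT : j ∈ T := by simpa using hj u
  suffices T = {j} by exact ⟨j, by rw [← this]; exact hT⟩
  refine Set.eq_singleton_iff_unique_mem.2 ⟨hjT, fun k hk => ?_⟩
  obtain ⟨S, hS'⟩ := hS.back _ _ hT v {j}
  have ok := (hS.ok' _ _ hS').1
  obtain ⟨x, hx⟩ := ok j
  obtain ⟨y, hy⟩ := ok k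
  have hx1 : x = i := by simpa [Function.update_of_ne huv.symm, hjT] using hx u
  have hy1 : y = i := by simpa [Function.update_of_ne huv.symm, hk] using hy u
  have hx2 : x ∈ S := by simpa using hx v
  have hy2 : k = j ↔ y ∈ S := by simpa using hy v
  rw [hy2, hy1, ← hx1]; exact hx2

/-- The bisimulation induced by the colouring strategy, keeping the first `c` colours. -/
def PtRel {G H : BinStruct σ} {c : ℕ}
    (Inv : (Fin (c + 3) → Set G.V) → (Fin (c + 3) → Set H.V) → Prop)
    (g : Fin (c + 3) → Set G.V) (h : Fin (c + 3) → Set H.V) (i : G.V) (j : H.V) : Prop :=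
  ∃ g' h', Inv g' h' ∧ (∀ t : Fin c, g' (liftCol t) = g (liftCol t)) ∧
    (∀ t : Fin c, h' (liftCol t) = h (liftCol t)) ∧
    ∃ u : Fin (c + 3), c ≤ u.val ∧ g' u = {i} ∧ h' u = {j}

theorem exists_spare {c : ℕ} (u : Fin (c + 3)) :
    ∃ v : Fin (c + 3), c ≤ v.val ∧ v ≠ u := by
  by_cases h : u.val = c
  · exact ⟨⟨c + 1, by omega⟩, by simp, fun e => by rw [← e] at h; simp at h⟩
  · exact ⟨⟨c, by omega⟩, by simp, fun e => h (by rw [← e])⟩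

theorem lift_ne {c : ℕ} (t : Fin c) {u : Fin (c + 3)} (hu : c ≤ u.val) : liftCol t ≠ u := by
  intro e
  have : (liftCol t).val = t.val := rfl
  rw [e] at this
  omega

theorem ptRel_step {G H : BinStruct σ} {c : ℕ}
    {Inv : (Fin (c + 3) → Set G.V) → (Fin (c + 3) → Set H.V) → Prop}
    (hS : Strat G H (c + 3) Inv)
    {g g' : Fin (c + 3) → Set G.V} {h h' : Fin (c + 3) → Set H.V} (hI : Inv g' h')
    (hg : ∀ t : Fin c, g' (liftCol t) = g (liftCol t))
    (hh : ∀ t : Fin c, h' (liftCol t) = h (liftCol t))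
    {u : Fin (c + 3)} (hu : c ≤ u.val) (i : G.V) :
    ∃ j, PtRel Inv g h i j ∧ Inv (Function.update g' u {i}) (Function.update h' u {j}) := by
  obtain ⟨v, -, hvu⟩ := exists_spare u
  obtain ⟨j, hj⟩ := hS.pick hI hvu i
  refine ⟨j, ⟨_, _, hj, fun t => ?_, fun t => ?_, u, hu, by simp, by simp⟩, hj⟩
  · rw [Function.update_of_ne (lift_ne t hu), hg]
  · rw [Function.update_of_ne (lift_ne t hu), hh]

theorem ptRel_sim {G H : BinStruct σ} {c : ℕ}
    {Inv : (Fin (c + 3) → Set G.V) → (Fin (c + 3) → Set H.V) → Prop}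
    (hS : Strat G H (c + 3) Inv)
    {g : Fin (c + 3) → Set G.V} {h : Fin (c + 3) → Set H.V} (hI : Inv g h) :
    Sim G H (PtRel Inv g h) := by
  constructor
  · intro i
    obtain ⟨j, hj, -⟩ := ptRel_step hS hI (fun _ => rfl) (fun _ => rfl)
      (u := ⟨c, by omega⟩) le_rfl i
    exact ⟨j, hj⟩
  · rintro i j ⟨g', h', hI', hg, hh, u, hu, hgu, hhu⟩ k
    obtain ⟨v, hv, hvu⟩ := exists_spare u
    obtain ⟨l, hl, hI2⟩ := ptRel_step hS hI' hg hh hv k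
    refine ⟨l, hl, ?_⟩
    generalize hg2 : Function.update g' v {k} = g2 at hI2
    generalize hh2 : Function.update h' v {l} = h2 at hI2
    have e1 : g2 u = {i} := by rw [← hg2, Function.update_of_ne hvu.symm, hgu]
    have e2 : h2 u = {j} := by rw [← hh2, Function.update_of_ne hvu.symm, hhu]
    have e3 : g2 v = {k} := by rw [← hg2, Function.update_self]
    have e4 : h2 v = {l} := by rw [← hh2, Function.update_self]
    have ok := hS.ok _ _ hI2
    have ok' := hS.ok' _ _ hI2
    have si : ∀ y, (∀ t, i ∈ g2 t ↔ y ∈ h2 t) → y = j := fun y hy => by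
      have := hy u; rw [e1, e2] at this; simpa using this
    have sk : ∀ y, (∀ t, k ∈ g2 t ↔ y ∈ h2 t) → y = l := fun y hy => by
      have := hy v; rw [e3, e4] at this; simpa using this
    have sj : ∀ y, (∀ t, j ∈ h2 t ↔ y ∈ g2 t) → y = i := fun y hy => by
      have := hy u; rw [e1, e2] at this; simpa using this
    have sl : ∀ y, (∀ t, l ∈ h2 t ↔ y ∈ g2 t) → y = k := fun y hy => by
      have := hy v; rw [e3, e4] at this; simpa using this
    refine ⟨⟨fun e => ?_, fun e => ?_⟩, fun b => ⟨⟨fun r => ?_, fun r => ?_⟩,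
      ⟨fun r => ?_, fun r => ?_⟩⟩⟩
    · obtain ⟨y, hy⟩ := ok.1 i
      rw [← si y hy]; exact sk y (e ▸ hy)
    · obtain ⟨y, hy⟩ := ok'.1 j
      rw [← sj y hy]; exact sl y (e ▸ hy)
    · obtain ⟨y, y', hy, hy', hr⟩ := ok.2 b _ _ r
      rwa [si y hy, sk y' hy'] at hr
    · obtain ⟨y, y', hy, hy', hr⟩ := ok'.2 b _ _ r
      rwa [sj y hy, sl y' hy'] at hr
    · obtain ⟨y, y', hy, hy', hr⟩ := ok.2 b _ _ r
      rwa [sk y hy, si y' hy'] at hr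
    · obtain ⟨y, y', hy, hy', hr⟩ := ok'.2 b _ _ r
      rwa [sl y hy, sj y' hy'] at hr

theorem ptRel_flip {G H : BinStruct σ} {c : ℕ}
    {Inv : (Fin (c + 3) → Set G.V) → (Fin (c + 3) → Set H.V) → Prop}
    {g : Fin (c + 3) → Set G.V} {h : Fin (c + 3) → Set H.V} :
    (fun j i => PtRel (G := G) (H := H) Inv g h i j) =
      PtRel (G := H) (H := G) (fun h g => Inv g h) h g := by
  funext j i
  apply propext
  constructor
  · rintro ⟨g', h', a, b, c, u, d, e, f⟩; exact ⟨h', g', a, c, b, u, d, f, e⟩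
  · rintro ⟨g', h', a, b, c, u, d, e, f⟩; exact ⟨h', g', a, c, b, u, d, f, e⟩

theorem ptRel_mem {G H : BinStruct σ} {c : ℕ}
    {Inv : (Fin (c + 3) → Set G.V) → (Fin (c + 3) → Set H.V) → Prop}
    (hS : Strat G H (c + 3) Inv)
    {g : Fin (c + 3) → Set G.V} {h : Fin (c + 3) → Set H.V} {i : G.V} {j : H.V}
    (hZ : PtRel Inv g h i j) (t : Fin c) : i ∈ g (liftCol t) ↔ j ∈ h (liftCol t) := by
  obtain ⟨g', h', hI, hg, hh, u, hu, hgu, hhu⟩ := hZ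
  obtain ⟨y, hy⟩ := (hS.ok _ _ hI).1 i
  have hyj : y = j := by have := hy u; rw [hgu, hhu] at this; simpa using this
  rw [← hg, ← hh, ← hyj]
  exact hy _

/-! ## Proof: the mirroring strategy -/

/-- `y` mirrors `x` with green parts `X` and `Y`. -/
def Mirrors {V W F : Type} (X : Set V) (Y : Set W) (x : Set (RbAtom V F))
    (y : Set (RbAtom W F)) : Prop :=
  EltRel (fun i j => i ∈ X ↔ j ∈ Y) x y ∧ greenPart x = X ∧ greenPart y = Y

theorem mirrors_of_elt {V W F : Type} (x : Set (RbAtom V F)) (Y : Set W) :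
    Mirrors (greenPart x) Y x (mirrorElt x Y) := by
  refine ⟨fun a b h => ?_, rfl, rfl⟩
  cases h with
  | green i j h => exact h
  | _ => exact Iff.rfl

theorem mirrors_of_elt' {V W F : Type} (y : Set (RbAtom W F)) (X : Set V) :
    Mirrors X (greenPart y) (mirrorElt y X) y := by
  refine ⟨fun a b h => ?_, rfl, rfl⟩
  cases h with
  | green i j h => exact h
  | _ => exact Iff.rfl

/-- The positions maintained by the mirroring strategy. -/
def MirPos (G H F : BinStruct σ) (c : ℕ)
    (Inv : (Fin (c + 3) → Set G.V) → (Fin (c + 3) → Set H.V) → Prop)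
    (α : Fin c → Option (Set (RbAtom G.V F.V))) (β : Fin c → Option (Set (RbAtom H.V F.V))) :
    Prop :=
  ∃ g h, Inv g h ∧ ∀ t, OptRel (Mirrors (g (liftCol t)) (h (liftCol t))) (α t) (β t)

theorem lift_inj {c : ℕ} {s t : Fin c} (h : liftCol s = liftCol t) : s = t :=
  Fin.castLE_injective _ h

theorem mirPos_update {G H F : BinStruct σ} {c : ℕ}
    {Inv : (Fin (c + 3) → Set G.V) → (Fin (c + 3) → Set H.V) → Prop}
    {α : Fin c → Option (Set (RbAtom G.V F.V))} {β : Fin c → Option (Set (RbAtom H.V F.V))}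
    {g : Fin (c + 3) → Set G.V} {h : Fin (c + 3) → Set H.V}
    (hαβ : ∀ t, OptRel (Mirrors (g (liftCol t)) (h (liftCol t))) (α t) (β t))
    {t : Fin c} {X Y x y} (hI : Inv (Function.update g (liftCol t) X)
      (Function.update h (liftCol t) Y)) (hm : Mirrors X Y x y) :
    MirPos G H F c Inv (Function.update α t (some x)) (Function.update β t (some y)) := by
  refine ⟨_, _, hI, fun s => ?_⟩
  by_cases hst : s = t
  · subst hst
    simp only [Function.update_self]
    exact Or.inr ⟨x, y, rfl, rfl, hm⟩
  · rw [Function.update_of_ne hst, Function.update_of_ne hst,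
      Function.update_of_ne (fun e => hst (lift_inj e)),
      Function.update_of_ne (fun e => hst (lift_inj e))]
    exact hαβ s

theorem mirPos_good {G H F : BinStruct σ} {c : ℕ}
    {Inv : (Fin (c + 3) → Set G.V) → (Fin (c + 3) → Set H.V) → Prop}
    (hS : Strat G H (c + 3) Inv)
    {α : Fin c → Option (Set (RbAtom G.V F.V))} {β : Fin c → Option (Set (RbAtom H.V F.V))}
    (hp : MirPos G H F c Inv α β) : GoodPos (rbOps G F) (rbOps H F) c α β := by
  obtain ⟨g, h, hI, hαβ⟩ := hp
  refine goodPos_of_sim (Z := PtRel Inv g h) (ptRel_sim hS hI) ?_ fun t => ?_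
  · rw [ptRel_flip]; exact ptRel_sim hS.flip hI
  · rcases hαβ t with h0 | ⟨x, y, hx, hy, hm, -, -⟩
    · exact Or.inl h0
    · exact Or.inr ⟨x, y, hx, hy, fun a b hab =>
        hm a b (hab.mono fun i j hij => ptRel_mem hS hij t)⟩

theorem mirPos_wins {G H F : BinStruct σ} {c : ℕ}
    {Inv : (Fin (c + 3) → Set G.V) → (Fin (c + 3) → Set H.V) → Prop}
    (hS : Strat G H (c + 3) Inv) (n : ℕ) :
    ∀ α β, MirPos G H F c Inv α β → ExWinsPebble (rbOps G F) (rbOps H F) c n α β := by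
  induction n with
  | zero => exact fun α β hp => mirPos_good hS hp
  | succ n ih =>
    intro α β hp
    refine ⟨mirPos_good hS hp, fun t x => ?_, fun t y => ?_⟩
    · obtain ⟨g, h, hI, hαβ⟩ := hp
      obtain ⟨Y, hY⟩ := hS.forth g h hI (liftCol t) (greenPart x)
      exact ⟨mirrorElt x Y, ih _ _ (mirPos_update hαβ hY (mirrors_of_elt x Y))⟩
    · obtain ⟨g, h, hI, hαβ⟩ := hp
      obtain ⟨X, hX⟩ := hS.back g h hI (liftCol t) (greenPart y)
      exact ⟨mirrorElt y X, ih _ _ (mirPos_update hαβ hX (mirrors_of_elt' y X))⟩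

theorem colWin_to_pebbleWin {σ : Type} (G H F : BinStruct σ) (c : ℕ)
    (hcol : ExSurvives G H (c + 3) (fun _ => ∅) (fun _ => ∅)) :
    ∀ n : ℕ, ExWinsPebble (rbOps G F) (rbOps H F) c n
      (fun _ => none) (fun _ => none) := by
  intro n
  obtain ⟨Inv, h0, hn, hf, hb⟩ := hcol
  have hS : Strat G H (c + 3) Inv :=
    ⟨fun g h hI => (colOK_of_not (hn g h hI)).1, fun g h hI => (colOK_of_not (hn g h hI)).2,
      hf, hb⟩
  exact mirPos_wins hS n _ _ ⟨_, _, h0, fun _ => Or.inl ⟨rfl, rfl⟩⟩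
end
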